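/- arXiv:1006.4762 — 2 statements merged into one kernel-verified Lean document; each statement's English description precedes it below -/
import Mathlib

section
/- Let n ≥ 3 and let P := F_q[X_1,…,X_n,Y_1,…,Y_n,Z_{2−n},…,Z_{n−2}] be a polynomial ring in 4n−3 variables, with φ: P → F_q[x_1,…,x_n,y_1,…,y_n] the F_q-algebra homomorphism X_i ↦ f_i, Y_i ↦ f_i*, Z_j ↦ u_j (2−n ≤ j ≤ n−2). For 0 ≤ t < s ≤ n define C_{s,t} := Σ_{1 ≤ j_1 < ⋯ < j_{s−t} ≤ s} ∏_{l=1}^{s−t} X_{j_l}^{(q−1)·q^{t+l−j_l}} ∈ P and C*_{s,t} the same expression with X replaced by Y, with C_{s,s} = C*_{s,s} := 1. For 1 ≤ k ≤ n define (whenever all Z-indices occurring lie in {2−n,…,n−2}) the polynomials R_k := Σ_{i=0}^{k−1} Σ_{j=0}^{n−k} (−1)^{i+j+n+1} C_{k−1,i} C*_{n−k,j} Z_{i−j}^{q^{min(i,j)}} − X_k Y_{n+1−k}, R_k^+ := Σ_{i=0}^{k−1} Σ_{j=0}^{n−k} (−1)^{i+j+n+1} C_{k−1,i}^q C*_{n−k,j}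 Z_{i−j+1}^{q^{min(i+1,j)}} − X_k^q Y_{n+1−k}, and R_k^− := Σ_{i=0}^{k−1} Σ_{j=0}^{n−k} (−1)^{i+j+n+1} C_{k−1,i} (C*_{n−k,j})^q Z_{i−j−1}^{q^{min(i,j+1)}} − X_k Y_{n+1−k}^q. Then the kernel of φ is the ideal of P generated by the 2n−3 polynomials R_1^+, R_2, R_3^−, R_3, R_4^−, R_4, R_5^−, …, R_{n−2}, R_{n−1}^−, R_{n−1}, R_n^− (that is, R_1^+ and R_2, then R_k^− and R_k for k = 3,…,n−1, then R_n^−). -/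
open MvPolynomial

variable (F : Type) [Field F] [Fintype F] (n : ℕ)

/-- `fX F n k` is the orbit product `f_k` (1-indexed, meaningful for `1 ≤ k ≤ n`). -/
noncomputable def fX (k : ℕ) : MvPolynomial (Fin n ⊕ Fin n) F :=
  if h : 1 ≤ k ∧ k ≤ n then
    ∏ α : Fin (k - 1) → F,
      (X (Sum.inl ⟨k - 1, by omega⟩) +
        ∑ j : Fin (k - 1), C (α j) * X (Sum.inl ⟨j.val, by omega⟩))
  else 0

/-- `fY F n k` is `f_k^*` (1-indexed), the orbit product of `y_{n+1-k}`. -/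
noncomputable def fY (k : ℕ) : MvPolynomial (Fin n ⊕ Fin n) F :=
  if h : 1 ≤ k ∧ k ≤ n then
    ∏ α : Fin (k - 1) → F,
      (X (Sum.inr ⟨n - k, by omega⟩) +
        ∑ j : Fin (k - 1), C (α j) * X (Sum.inr ⟨n - 1 - j.val, by omega⟩))
  else 0

/-- `uInv F n j` is the invariant `u_j`, for `j : ℤ`. -/
noncomputable def uInv (j : ℤ) : MvPolynomial (Fin n ⊕ Fin n) F :=
  if 0 ≤ j then ∑ k : Fin n, X (Sum.inl k) ^ (Fintype.card F) ^ j.toNat * X (Sum.inr k)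
  else ∑ k : Fin n, X (Sum.inl k) * X (Sum.inr k) ^ (Fintype.card F) ^ (-j).toNat

/-- `cX F n s t` is the Dickson-type invariant `c_{s,t}` (in the `x`-variables):
the sum over strictly increasing sequences `1 ≤ j_1 < ⋯ < j_{s-t} ≤ s` (encoded as
strictly monotone functions `Fin (s-t) → Fin s`) of `∏_l f_{j_l}^{(q-1)·q^{t+l-j_l}}`. -/
noncomputable def cX (s t : ℕ) : MvPolynomial (Fin n ⊕ Fin n) F :=
  if s ≤ n then
    ∑ g ∈ Finset.univ.filter (fun g : Fin (s - t) → Fin s => ∀ a b : Fin (s - t), a < b → g a < g b),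
      ∏ l : Fin (s - t),
        fX F n ((g l).val + 1) ^ ((Fintype.card F - 1) * (Fintype.card F) ^ (t + l.val - (g l).val))
  else 0

/-- `cY F n s t` is `c_{s,t}^*` (in the `y`-variables). -/
noncomputable def cY (s t : ℕ) : MvPolynomial (Fin n ⊕ Fin n) F :=
  if s ≤ n then
    ∑ g ∈ Finset.univ.filter (fun g : Fin (s - t) → Fin s => ∀ a b : Fin (s - t), a < b → g a < g b),
      ∏ l : Fin (s - t),
        fY F n ((g l).val + 1) ^ ((Fintype.card F - 1) * (Fintype.card F) ^ (t + l.val - (g l).val))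
  else 0

/-- The variable `X_k` (1-indexed) of the presentation ring `P` for `U_n`. -/
noncomputable def Xv (k : ℕ) : MvPolynomial (Fin n ⊕ Fin n ⊕ Fin (2 * n - 3)) F :=
  if h : 1 ≤ k ∧ k ≤ n then X (Sum.inl ⟨k - 1, by omega⟩) else 0

/-- The variable `Y_k` (1-indexed). -/
noncomputable def Yv (k : ℕ) : MvPolynomial (Fin n ⊕ Fin n ⊕ Fin (2 * n - 3)) F :=
  if h : 1 ≤ k ∧ k ≤ n then X (Sum.inr (Sum.inl ⟨k - 1, by omega⟩)) else 0

/-- The variable `Z_j` for `j ∈ {2-n,…,n-2}`. -/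
noncomputable def Zv (j : ℤ) : MvPolynomial (Fin n ⊕ Fin n ⊕ Fin (2 * n - 3)) F :=
  if h : 2 - (n : ℤ) ≤ j ∧ j ≤ (n : ℤ) - 2 then
    X (Sum.inr (Sum.inr ⟨(j + n - 2).toNat, by omega⟩))
  else 0

/-- `C_{s,t}` in the presentation ring. -/
noncomputable def CXv (s t : ℕ) : MvPolynomial (Fin n ⊕ Fin n ⊕ Fin (2 * n - 3)) F :=
  ∑ g ∈ Finset.univ.filter (fun g : Fin (s - t) → Fin s => ∀ a b : Fin (s - t), a < b → g a < g b),
    ∏ l : Fin (s - t),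
      Xv F n ((g l).val + 1) ^ ((Fintype.card F - 1) * (Fintype.card F) ^ (t + l.val - (g l).val))

/-- `C_{s,t}^*` in the presentation ring. -/
noncomputable def CYv (s t : ℕ) : MvPolynomial (Fin n ⊕ Fin n ⊕ Fin (2 * n - 3)) F :=
  ∑ g ∈ Finset.univ.filter (fun g : Fin (s - t) → Fin s => ∀ a b : Fin (s - t), a < b → g a < g b),
    ∏ l : Fin (s - t),
      Yv F n ((g l).val + 1) ^ ((Fintype.card F - 1) * (Fintype.card F) ^ (t + l.val - (g l).val))

/-- The relation polynomial `R_k`. -/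
noncomputable def Rv (k : ℕ) : MvPolynomial (Fin n ⊕ Fin n ⊕ Fin (2 * n - 3)) F :=
  (∑ i ∈ Finset.range k, ∑ j ∈ Finset.range (n - k + 1),
    (-1 : MvPolynomial (Fin n ⊕ Fin n ⊕ Fin (2 * n - 3)) F) ^ (i + j + n + 1) *
      CXv F n (k - 1) i * CYv F n (n - k) j *
      Zv F n ((i : ℤ) - (j : ℤ)) ^ (Fintype.card F ^ min i j))
  - Xv F n k * Yv F n (n + 1 - k)

/-- The relation polynomial `R_k^+`. -/
noncomputable def RvPlus (k : ℕ) : MvPolynomial (Fin n ⊕ Fin n ⊕ Fin (2 * n - 3)) F :=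
  (∑ i ∈ Finset.range k, ∑ j ∈ Finset.range (n - k + 1),
    (-1 : MvPolynomial (Fin n ⊕ Fin n ⊕ Fin (2 * n - 3)) F) ^ (i + j + n + 1) *
      CXv F n (k - 1) i ^ (Fintype.card F) * CYv F n (n - k) j *
      Zv F n ((i : ℤ) - (j : ℤ) + 1) ^ (Fintype.card F ^ min (i + 1) j))
  - Xv F n k ^ (Fintype.card F) * Yv F n (n + 1 - k)

/-- The relation polynomial `R_k^-`. -/
noncomputable def RvMinus (k : ℕ) : MvPolynomial (Fin n ⊕ Fin n ⊕ Fin (2 * n - 3)) F :=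
  (∑ i ∈ Finset.range k, ∑ j ∈ Finset.range (n - k + 1),
    (-1 : MvPolynomial (Fin n ⊕ Fin n ⊕ Fin (2 * n - 3)) F) ^ (i + j + n + 1) *
      CXv F n (k - 1) i * CYv F n (n - k) j ^ (Fintype.card F) *
      Zv F n ((i : ℤ) - (j : ℤ) - 1) ^ (Fintype.card F ^ min i (j + 1)))
  - Xv F n k * Yv F n (n + 1 - k) ^ (Fintype.card F)

/-!
Write `φ` for the presentation map and `J` for the ideal of relations. All three families of
relations come from one identity: the coefficients `C_{s,t}` are, up to sign, those of the additive
polynomial `T ↦ ∏ (T + α_1 x_1 + ⋯ + α_s x_s)`, which kills `x_1, …, x_s` and sends `x_{s+1}` to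
`f_{s+1}`. Applying it to every `x_m`, its dual to every `y_m`, and summing the products over `m`
leaves the single term `f_{s+1} f_{n-s}^*`; expanding both polynomials instead gives the `u_j`.

Give the `X`'s and `Y`'s weight `0` and `Z_j` weight `q ^ |j| + 1`. Then the leading term of each
generator of `J` is a power of a variable `Z_j` of its own, so the generators together with the
`X`'s form a regular sequence in any order, and each `X_k` is a nonzerodivisor modulo `J`. After
inverting the `X`'s the relations can be solved for `Y_2, …, Y_n` and the `Z_j` with `j < 0`, which
leaves the `2 n` variables `X_1, …, X_n, Y_1, Z_0, …, Z_{n-2}`. Their images under `φ` generate a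
ring over which `F[x, y]` is algebraic, hence are algebraically independent. So `φ` is injective
modulo `J` after inverting the `X`'s, and therefore `J = ker φ`.
-/

section WeightFiltration

variable {σ R : Type*} [CommRing R] {w : σ → ℕ} {a b d : ℕ} {p r : MvPolynomial σ R}

variable (R w d) in
/-- The filtration of a polynomial ring by weight: all monomials have weight `< d`. The strict
inequality makes `weightLT R w 0 = ⊥`, so that inductions on `d` start at zero. -/
noncomputable def weightLT : Submodule R (MvPolynomial σ R) :=
  restrictSupport R {c | Finsupp.weight w c < d}

theorem mem_weightLT : p ∈ weightLT R w d ↔ ∀ c ∈ p.support, Finsupp.weight w c < d :=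
  Iff.rfl

theorem monomial_mem_weightLT {c : σ →₀ ℕ} (h : Finsupp.weight w c < d) (x : R) :
    monomial c x ∈ weightLT R w d := by
  rw [weightLT, monomial_mem_restrictSupport]
  exact Or.inl h

theorem weightLT_mono : Monotone (weightLT R w) :=
  fun _ _ h => restrictSupport_mono R fun _ hc => lt_of_lt_of_le hc h

theorem eq_zero_of_mem_weightLT_zero (hp : p ∈ weightLT R w 0) : p = 0 := by
  rw [← support_eq_empty, Finset.eq_empty_iff_forall_notMem]
  exact fun c hc => (mem_weightLT.1 hp c hc).not_ge (Nat.zero_le _)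

theorem exists_mem_weightLT (w : σ → ℕ) (p : MvPolynomial σ R) : ∃ d, p ∈ weightLT R w d :=
  ⟨p.support.sup (Finsupp.weight w) + 1,
    mem_weightLT.2 fun _ hc => Nat.lt_succ_iff.2 (Finset.le_sup (f := Finsupp.weight w) hc)⟩

theorem mul_mem_weightLT (hp : p ∈ weightLT R w (a + 1)) (hr : r ∈ weightLT R w b) :
    p * r ∈ weightLT R w (a + b) := by
  classical
  refine mem_weightLT.2 fun c hc => ?_
  obtain ⟨c₁, h₁, c₂, h₂, rfl⟩ := Finset.mem_add.1 (support_mul p r hc)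
  have := mem_weightLT.1 hp c₁ h₁
  have := mem_weightLT.1 hr c₂ h₂
  rw [map_add]
  lia

theorem C_mem_weightLT (x : R) : (C x : MvPolynomial σ R) ∈ weightLT R w 1 :=
  monomial_mem_weightLT (by simp) x

theorem X_mem_weightLT (i : σ) : (X i : MvPolynomial σ R) ∈ weightLT R w (w i + 1) :=
  monomial_mem_weightLT (by simp [Finsupp.weight_single]) 1

theorem pow_mem_weightLT (hp : p ∈ weightLT R w (a + 1)) (k : ℕ) :
    p ^ k ∈ weightLT R w (k * a + 1) := by
  induction k with
  | zero => simpa using C_mem_weightLT (1 : R)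
  | succ k ih =>
    rw [pow_succ, add_one_mul, add_assoc]
    exact mul_mem_weightLT ih hp

variable (R w) in
/-- The polynomials of weight zero, as a subalgebra. -/
noncomputable def weightZero : Subalgebra R (MvPolynomial σ R) :=
  (weightLT R w 1).toSubalgebra (C_mem_weightLT 1) fun _ _ hp hr => mul_mem_weightLT hp hr

theorem mem_weightZero : p ∈ weightZero R w ↔ p ∈ weightLT R w 1 :=
  Iff.rfl

theorem X_mem_weightZero {i : σ} (h : w i = 0) : X i ∈ weightZero R w := by
  simpa [mem_weightZero, h] using X_mem_weightLT (R := R) (w := w) i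

variable (w p) in
/-- `p` is monic with leading monomial `c`: all its other monomials have smaller weight. -/
def HasLeadMonomial (c : σ →₀ ℕ) : Prop :=
  p - monomial c 1 ∈ weightLT R w (Finsupp.weight w c)

namespace HasLeadMonomial

variable {c c' : σ →₀ ℕ}

theorem mem_weightLT (h : HasLeadMonomial w p c) :
    p ∈ weightLT R w (Finsupp.weight w c + 1) := by
  have hc := monomial_mem_weightLT (Nat.lt_succ_self (Finsupp.weight w c)) (1 : R)
  simpa using add_mem (weightLT_mono (Nat.le_succ _) h) hc

theorem one : HasLeadMonomial w (1 : MvPolynomial σ R) 0 := by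
  simp [HasLeadMonomial, monomial_zero']

theorem X (i : σ) : HasLeadMonomial w (X i : MvPolynomial σ R) (Finsupp.single i 1) := by
  simp [HasLeadMonomial, MvPolynomial.X]

theorem mul (hp : HasLeadMonomial w p c) (hr : HasLeadMonomial w r c') :
    HasLeadMonomial w (p * r) (c + c') := by
  have hc' := monomial_mem_weightLT (Nat.lt_succ_self (Finsupp.weight w c')) (1 : R)
  have hmul : (monomial (c + c') 1 : MvPolynomial σ R) = monomial c 1 * monomial c' 1 := by
    rw [monomial_mul, one_mul]
  have split : p * r - monomial (c + c') 1 =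
      p * (r - monomial c' 1) + monomial c' 1 * (p - monomial c 1) := by
    rw [hmul]
    ring
  rw [HasLeadMonomial, split, map_add]
  refine add_mem (mul_mem_weightLT hp.mem_weightLT hr) ?_
  rw [add_comm]
  exact mul_mem_weightLT hc' hp

theorem pow (h : HasLeadMonomial w p c) (k : ℕ) : HasLeadMonomial w (p ^ k) (k • c) := by
  induction k with
  | zero => simpa using one
  | succ k ih =>
    rw [pow_succ, succ_nsmul]
    exact ih.mul h

theorem prod {ι : Type*} (s : Finset ι) {f : ι → MvPolynomial σ R} {c : ι → σ →₀ ℕ}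
    (h : ∀ i ∈ s, HasLeadMonomial w (f i) (c i)) :
    HasLeadMonomial w (∏ i ∈ s, f i) (∑ i ∈ s, c i) := by
  classical
  induction s using Finset.induction_on with
  | empty => simpa using one
  | insert a s ha ih =>
    rw [Finset.prod_insert ha, Finset.sum_insert ha]
    exact (h a (Finset.mem_insert_self a s)).mul
      (ih fun i hi => h i (Finset.mem_insert_of_mem hi))

end HasLeadMonomial

theorem bijective_of_sub_mem_weightLT (T : MvPolynomial σ R →ₗ[R] MvPolynomial σ R)
    (hT : ∀ d, ∀ p ∈ weightLT R w (d + 1), T p - p ∈ weightLT R w d) :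
    Function.Bijective T := by
  constructor
  · refine (injective_iff_map_eq_zero T).2 fun p hp => ?_
    obtain ⟨d, hd⟩ := exists_mem_weightLT w p
    induction d with
    | zero => exact eq_zero_of_mem_weightLT_zero hd
    | succ d ih =>
      apply ih
      simpa [hp] using hT d p hd
  · intro p
    obtain ⟨d, hd⟩ := exists_mem_weightLT w p
    induction d generalizing p with
    | zero => exact ⟨0, by rw [eq_zero_of_mem_weightLT_zero hd, map_zero]⟩
    | succ d ih =>
      obtain ⟨r, hr⟩ := ih _ (hT d p hd)
      exact ⟨p - r, by rw [map_sub, hr, sub_sub_cancel]⟩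

end WeightFiltration

section PurePowerLeading

variable {σ R : Type*} [Fintype σ] [CommRing R] {w e : σ → ℕ} {r : σ → MvPolynomial σ R}

/-- The monomial `c` with `X i ^ e i` replaced by `r i` as often as possible. -/
noncomputable def standardMonomial (e : σ → ℕ) (r : σ → MvPolynomial σ R) (c : σ →₀ ℕ) :
    MvPolynomial σ R :=
  ∏ i, X i ^ (c i % e i) * r i ^ (c i / e i)

/-- The linear map sending each monomial to its `standardMonomial`. It turns multiplication by
`X i ^ e i` into multiplication by `r i`, hence monomial ideals into ideals generated by some of
the `r i`. -/
noncomputable def standardMap (e : σ → ℕ) (r : σ → MvPolynomial σ R) :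
    MvPolynomial σ R →ₗ[R] MvPolynomial σ R :=
  (basisMonomials σ R).constr R (standardMonomial e r)

theorem standardMap_monomial (c : σ →₀ ℕ) :
    standardMap e r (monomial c 1) = standardMonomial e r c := by
  simpa [standardMap] using (basisMonomials σ R).constr_basis R (standardMonomial e r) c

theorem hasLeadMonomial_standardMonomial
    (hr : ∀ i, HasLeadMonomial w (r i) (Finsupp.single i (e i))) (c : σ →₀ ℕ) :
    HasLeadMonomial w (standardMonomial e r c) c := by
  classical
  have hc : ∑ i, ((c i % e i) • Finsupp.single i 1 + (c i / e i) • Finsupp.single i (e i)) = c := by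
    conv_rhs => rw [← Finsupp.univ_sum_single c]
    refine Finset.sum_congr rfl fun i _ => ?_
    rw [Finsupp.smul_single, Finsupp.smul_single, ← Finsupp.single_add, smul_eq_mul, smul_eq_mul,
      mul_one, Nat.mod_add_div']
  have hprod := HasLeadMonomial.prod Finset.univ fun i _ =>
    ((HasLeadMonomial.X (R := R) (w := w) i).pow (c i % e i)).mul ((hr i).pow (c i / e i))
  rwa [hc] at hprod

theorem standardMap_bijective
    (hr : ∀ i, HasLeadMonomial w (r i) (Finsupp.single i (e i))) :
    Function.Bijective (standardMap e r) := by
  refine bijective_of_sub_mem_weightLT (w := w) _ fun d p hp => ?_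
  rw [weightLT, restrictSupport_eq_span] at hp
  induction hp using Submodule.span_induction with
  | mem p h =>
    obtain ⟨c, hc, rfl⟩ := h
    rw [standardMap_monomial]
    exact weightLT_mono (Nat.lt_succ_iff.1 hc) (hasLeadMonomial_standardMonomial hr c)
  | zero => simp
  | add p p' _ _ hp hp' =>
    rw [map_add, add_sub_add_comm]
    exact add_mem hp hp'
  | smul x p _ hp =>
    rw [map_smul, ← smul_sub]
    exact Submodule.smul_mem _ _ hp

theorem standardMonomial_single_add {i : σ} (hi : 0 < e i) (c : σ →₀ ℕ) :
    standardMonomial e r (Finsupp.single i (e i) + c) = r i * standardMonomial e r c := by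
  classical
  simp only [standardMonomial]
  rw [← Finset.mul_prod_erase _ _ (Finset.mem_univ i),
    ← Finset.mul_prod_erase _ (fun j => X j ^ (c j % e j) * r j ^ (c j / e j)) (Finset.mem_univ i),
    Finsupp.add_apply, Finsupp.single_eq_same, Nat.add_mod_left, Nat.add_div_left _ hi, pow_succ']
  have others : ∀ j ∈ Finset.univ.erase i, (Finsupp.single i (e i) + c) j = c j := fun j hj => by
    simp [Finset.ne_of_mem_erase hj]
  rw [Finset.prod_congr rfl fun j hj => by rw [others j hj]]
  ring

theorem standardMap_X_pow_mul {i : σ} (hi : 0 < e i) (p : MvPolynomial σ R) :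
    standardMap e r (X i ^ e i * p) = r i * standardMap e r p := by
  induction p using MvPolynomial.induction_on' with
  | monomial c x =>
    have hx : (monomial c x : MvPolynomial σ R) = x • monomial c 1 := by
      rw [smul_monomial, smul_eq_mul, mul_one]
    rw [hx, mul_smul_comm, map_smul, map_smul, mul_smul_comm, X_pow_eq_monomial, monomial_mul,
      one_mul, standardMap_monomial, standardMap_monomial, standardMonomial_single_add hi]
  | add p p' hp hp' => rw [mul_add, map_add, map_add, hp, hp', mul_add]

theorem standardMap_mem_span_iff (he : ∀ i, 0 < e i)
    (hr : ∀ i, HasLeadMonomial w (r i) (Finsupp.single i (e i))) (τ : Set σ)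
    (p : MvPolynomial σ R) :
    standardMap e r p ∈ Ideal.span (r '' τ) ↔
      p ∈ Ideal.span ((fun i => X i ^ e i : σ → MvPolynomial σ R) '' τ) := by
  obtain ⟨inj, surj⟩ := standardMap_bijective hr
  constructor
  · intro hp
    suffices ∀ s ∈ Ideal.span (r '' τ), ∃ p ∈ Ideal.span
        ((fun i => X i ^ e i : σ → MvPolynomial σ R) '' τ), standardMap e r p = s by
      obtain ⟨p', hp', h⟩ := this _ hp
      rwa [← inj h]
    intro s hs
    induction hs using Submodule.closure_induction with
    | zero => exact ⟨0, zero_mem _, map_zero _⟩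
    | add _ _ _ _ h h' =>
      obtain ⟨s, hs, rfl⟩ := h
      obtain ⟨s', hs', rfl⟩ := h'
      exact ⟨s + s', add_mem hs hs', map_add _ _ _⟩
    | smul_mem a _ h =>
      obtain ⟨i, hi, rfl⟩ := h
      obtain ⟨a, rfl⟩ := surj a
      refine ⟨X i ^ e i * a, Ideal.mul_mem_right _ _ (Ideal.subset_span ⟨i, hi, rfl⟩), ?_⟩
      rw [standardMap_X_pow_mul (he i), smul_eq_mul, mul_comm]
  · intro hp
    induction hp using Submodule.closure_induction with
    | zero => simp
    | add _ _ _ _ h h' =>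
      rw [map_add]
      exact add_mem h h'
    | smul_mem a _ h =>
      obtain ⟨i, hi, rfl⟩ := h
      rw [smul_eq_mul, mul_comm, standardMap_X_pow_mul (he i)]
      exact Ideal.mul_mem_right _ _ (Ideal.subset_span ⟨i, hi, rfl⟩)

omit [Fintype σ] in
theorem mem_span_X_pow_of_X_pow_mul_mem {τ : Set σ} {k : σ} (hk : k ∉ τ) {m : ℕ}
    {p : MvPolynomial σ R}
    (h : X k ^ m * p ∈ Ideal.span ((fun i => X i ^ e i : σ → MvPolynomial σ R) '' τ)) :
    p ∈ Ideal.span ((fun i => X i ^ e i : σ → MvPolynomial σ R) '' τ) := by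
  classical
  have image_eq : (fun i => X i ^ e i : σ → MvPolynomial σ R) '' τ =
      (fun c => monomial c 1) '' ((fun i => Finsupp.single i (e i)) '' τ) := by
    simp only [Set.image_image, X_pow_eq_monomial]
  rw [image_eq, mem_ideal_span_monomial_image] at h ⊢
  intro c hc
  obtain ⟨_, ⟨i, hi, rfl⟩, hle⟩ := h (Finsupp.single k m + c) (by
    rwa [mem_support_iff, X_pow_eq_monomial, coeff_monomial_mul, one_mul, ← mem_support_iff])
  have hik : i ≠ k := fun hik => hk (hik ▸ hi)
  exact ⟨_, ⟨i, hi, rfl⟩, Finsupp.single_le_iff.2 <| by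
    simpa [Finsupp.single_apply, hik.symm] using Finsupp.single_le_iff.1 hle⟩

omit [Fintype σ] in
/-- Polynomials led by pure powers of distinct variables form a regular sequence in any order. -/
theorem mem_span_of_mul_mem [Finite σ] (he : ∀ i, 0 < e i)
    (hr : ∀ i, HasLeadMonomial w (r i) (Finsupp.single i (e i))) {τ : Set σ} {k : σ}
    (hk : k ∉ τ) {p : MvPolynomial σ R} (h : r k * p ∈ Ideal.span (r '' τ)) :
    p ∈ Ideal.span (r '' τ) := by
  have := Fintype.ofFinite σ
  obtain ⟨p, rfl⟩ := (standardMap_bijective hr).2 p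
  rw [← standardMap_X_pow_mul (he k), standardMap_mem_span_iff he hr] at h
  exact (standardMap_mem_span_iff he hr τ p).2 (mem_span_X_pow_of_X_pow_mul_mem hk h)

end PurePowerLeading

section IncreasingSum

variable {M A : Type*} {m s : ℕ}

theorem strictMono_snoc_castSucc {g : Fin m → Fin s} (hg : StrictMono g) :
    StrictMono (Fin.snoc (α := fun _ => Fin (s + 1)) (fun l => (g l).castSucc) (Fin.last s)) := by
  intro a b hab
  obtain ⟨a, rfl⟩ := Fin.exists_castSucc_eq.2 (hab.trans_le (Fin.le_last b)).ne
  cases b using Fin.lastCases with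
  | last => simp
  | cast b => simpa using hg (Fin.castSucc_lt_castSucc_iff.1 hab)

theorem sum_strictMono_of_last_eq [AddCommMonoid M] (φ : (Fin (m + 1) → Fin (s + 1)) → M) :
    ∑ g with StrictMono g ∧ g (Fin.last m) = Fin.last s, φ g =
      ∑ g : Fin m → Fin s with StrictMono g,
        φ (Fin.snoc (α := fun _ => Fin (s + 1)) (fun l => (g l).castSucc) (Fin.last s)) := by
  symm
  refine Finset.sum_nbij _ (fun g hg => ?_) (fun g _ g' _ h => ?_) (fun g hg => ?_) fun _ _ => rfl
  · simp only [Finset.mem_filter_univ, Fin.snoc_last, and_true] at hg ⊢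
    exact strictMono_snoc_castSucc hg
  · funext l
    simpa using congrFun h l.castSucc
  · simp only [Finset.coe_filter_univ, Set.mem_ofPred_eq] at hg
    have ne_last (l : Fin m) : g l.castSucc ≠ Fin.last s :=
      (hg.2 ▸ hg.1 (Fin.castSucc_lt_last l)).ne
    refine ⟨fun l => (g l.castSucc).castPred (ne_last l), ?_, ?_⟩
    · simp only [Finset.coe_filter_univ, Set.mem_ofPred_eq]
      exact fun a b hab =>
        Fin.castPred_lt_castPred_iff.2 (hg.1 (Fin.castSucc_lt_castSucc_iff.2 hab))
    · funext l
      cases l using Fin.lastCases <;> simp [hg.2]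

theorem sum_strictMono_of_last_ne [AddCommMonoid M] (φ : (Fin (m + 1) → Fin (s + 1)) → M) :
    ∑ g with StrictMono g ∧ g (Fin.last m) ≠ Fin.last s, φ g =
      ∑ g : Fin (m + 1) → Fin s with StrictMono g, φ fun l => (g l).castSucc := by
  symm
  refine Finset.sum_nbij _ (fun g hg => ?_) (fun g _ g' _ h => ?_) (fun g hg => ?_) fun _ _ => rfl
  · simp only [Finset.mem_filter_univ] at hg ⊢
    exact ⟨fun a b hab => Fin.castSucc_lt_castSucc_iff.2 (hg hab), (Fin.castSucc_lt_last _).ne⟩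
  · funext l
    simpa using congrFun h l
  · simp only [Finset.coe_filter_univ, Set.mem_ofPred_eq] at hg
    have ne_last (l : Fin (m + 1)) : g l ≠ Fin.last s :=
      ((hg.1.monotone (Fin.le_last l)).trans_lt (Fin.lt_last_iff_ne_last.2 hg.2)).ne
    refine ⟨fun l => (g l).castPred (ne_last l), ?_, ?_⟩
    · simp only [Finset.coe_filter_univ, Set.mem_ofPred_eq]
      exact fun a b hab => Fin.castPred_lt_castPred_iff.2 (hg.1 hab)
    · funext l
      simp

theorem val_add_sub_le_of_strictMono {g : Fin m → Fin s} (hg : StrictMono g) (l : Fin m) :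
    (g l).val + (m - l.val) ≤ s := by
  have maps : ∀ b ∈ Finset.Ioi l, g b ∈ Finset.Ioi (g l) := fun b hb =>
    Finset.mem_Ioi.2 (hg (Finset.mem_Ioi.1 hb))
  have hcard := Finset.card_le_card_of_injOn g maps hg.injective.injOn
  rw [Fin.card_Ioi, Fin.card_Ioi] at hcard
  lia

/-- The sums defining `CXv` and `CYv`, with the length `m` of the increasing sequences kept
separate from the exponent offset `t` so that recursion in `s` makes sense. -/
def increasingSum [CommSemiring A] (q : ℕ) (f : ℕ → A) (m s t : ℕ) : A :=
  ∑ g : Fin m → Fin s with StrictMono g,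
    ∏ l : Fin m, f ((g l).val + 1) ^ ((q - 1) * q ^ (t + l.val - (g l).val))

variable [CommSemiring A] {q : ℕ} {f : ℕ → A} {t : ℕ}

theorem increasingSum_zero : increasingSum q f 0 s t = 1 := by
  simp [increasingSum, Subsingleton.strictMono]

theorem increasingSum_of_lt (h : s < m) : increasingSum q f m s t = 0 := by
  rw [increasingSum, Finset.filter_eq_empty_iff.2, Finset.sum_empty]
  intro g _ hg
  have := val_add_sub_le_of_strictMono hg ⟨0, by lia⟩
  lia

theorem increasingSum_succ :
    increasingSum q f (m + 1) (s + 1) t =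
      f (s + 1) ^ ((q - 1) * q ^ (t + m - s)) * increasingSum q f m s t +
        increasingSum q f (m + 1) s t := by
  simp only [increasingSum]
  rw [← Finset.sum_filter_add_sum_filter_not _ fun g : Fin (m + 1) → Fin (s + 1) =>
    g (Fin.last m) = Fin.last s, Finset.filter_filter, Finset.filter_filter,
    sum_strictMono_of_last_eq, sum_strictMono_of_last_ne, Finset.mul_sum]
  congr 1
  refine Finset.sum_congr rfl fun g _ => ?_
  simp [Fin.prod_univ_castSucc, mul_comm]

end IncreasingSum

section SubspaceCoeff

variable {A : Type*} [CommSemiring A] {q : ℕ} {f : ℕ → A} {s t : ℕ}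

/-- The coefficients, up to sign, of `subspacePoly`; over an algebra over the field with `q`
elements they are the `C_{s,t}` of the paper. As there, the sequence `f` is indexed from `1`. -/
def subspaceCoeff (q : ℕ) (f : ℕ → A) : ℕ → ℕ → A
  | 0, 0 => 1
  | 0, _ + 1 => 0
  | s + 1, 0 => f (s + 1) ^ (q - 1) * subspaceCoeff q f s 0
  | s + 1, t + 1 => subspaceCoeff q f s t ^ q + f (s + 1) ^ (q - 1) * subspaceCoeff q f s (t + 1)

theorem subspaceCoeff_of_lt (hq : q ≠ 0) (h : s < t) : subspaceCoeff q f s t = 0 := by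
  induction s generalizing t with
  | zero =>
    obtain ⟨t, rfl⟩ := Nat.exists_eq_succ_of_ne_zero h.ne'
    rfl
  | succ s ih =>
    obtain ⟨t, rfl⟩ := Nat.exists_eq_succ_of_ne_zero (Nat.ne_zero_of_lt h)
    rw [Nat.succ_eq_add_one, subspaceCoeff, ih (by lia), ih (by lia), zero_pow hq, mul_zero,
      add_zero]

theorem subspaceCoeff_self (hq : q ≠ 0) : subspaceCoeff q f s s = 1 := by
  induction s with
  | zero => rfl
  | succ s ih =>
    rw [subspaceCoeff, ih, subspaceCoeff_of_lt hq (Nat.lt_succ_self s), mul_zero, add_zero, one_pow]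

theorem subspaceCoeff_zero_right :
    subspaceCoeff q f s 0 = ∏ k ∈ Finset.range s, f (k + 1) ^ (q - 1) := by
  induction s with
  | zero => simp [subspaceCoeff]
  | succ s ih => rw [subspaceCoeff, ih, Finset.prod_range_succ_comm]

theorem map_subspaceCoeff {B G : Type*} [CommSemiring B] [FunLike G A B] [RingHomClass G A B]
    (φ : G) (s t : ℕ) :
    φ (subspaceCoeff q f s t) = subspaceCoeff q (φ ∘ f) s t := by
  induction s generalizing t with
  | zero => cases t <;> simp [subspaceCoeff]
  | succ s ih => cases t <;> simp [subspaceCoeff, ih]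

theorem subspaceCoeff_mem {S : Type*} [SetLike S A] [SubsemiringClass S A] {B : S}
    (hf : ∀ k < s, f (k + 1) ∈ B) (t : ℕ) : subspaceCoeff q f s t ∈ B := by
  induction s generalizing t with
  | zero =>
    cases t
    · exact one_mem B
    · exact zero_mem B
  | succ s ih =>
    have hs := pow_mem (hf s (Nat.lt_succ_self s)) (q - 1)
    replace ih := ih fun k hk => hf k (hk.trans (Nat.lt_succ_self s))
    cases t
    · exact mul_mem hs (ih 0)
    · exact add_mem (pow_mem (ih _) q) (mul_mem hs (ih _))

end SubspaceCoeff

section FiniteField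

variable {F : Type*} [Field F] [Fintype F] {A : Type*} [CommRing A] [Algebra F A]

local notation "q" => Fintype.card F

theorem pow_card_eq_frobeniusAlgHom (x : A) : x ^ q = FiniteField.frobeniusAlgHom F A x :=
  rfl

theorem increasingSum_pow_card {f : ℕ → A} {m s t : ℕ} (h : s ≤ m + t) :
    increasingSum q f m s t ^ q = increasingSum q f m s (t + 1) := by
  simp only [pow_card_eq_frobeniusAlgHom, increasingSum, map_sum, map_prod]
  refine Finset.sum_congr rfl fun g hg => Finset.prod_congr rfl fun l _ => ?_
  have := val_add_sub_le_of_strictMono ((Finset.mem_filter_univ g).1 hg) l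
  rw [← pow_card_eq_frobeniusAlgHom, ← pow_mul, mul_assoc, ← pow_succ]
  congr 3
  lia

theorem increasingSum_eq_subspaceCoeff {f : ℕ → A} {s t : ℕ} (h : t ≤ s) :
    increasingSum q f (s - t) s t = subspaceCoeff q f s t := by
  have hq : q ≠ 0 := Fintype.card_ne_zero
  induction s generalizing t with
  | zero =>
    obtain rfl := Nat.le_zero.1 h
    exact increasingSum_zero
  | succ s ih =>
    obtain rfl | hts := h.eq_or_lt
    · rw [Nat.sub_self, increasingSum_zero, subspaceCoeff_self hq]
    · obtain ⟨m, rfl⟩ := Nat.exists_eq_add_of_le (Nat.lt_succ_iff.1 hts)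
      have ih_same := ih (Nat.le_add_right t m)
      rw [Nat.add_sub_cancel_left] at ih_same
      rw [show t + m + 1 - t = m + 1 by lia, increasingSum_succ, Nat.sub_self, pow_zero, mul_one]
      cases t with
      | zero => rw [subspaceCoeff, ih_same, increasingSum_of_lt (by lia), add_zero]
      | succ t =>
        rw [subspaceCoeff, ih_same, ← ih (t := t) (by lia), increasingSum_pow_card (by lia),
          show t + 1 + m - t = m + 1 by lia, add_comm]

end FiniteField

section SubspacePoly

variable {A : Type*} [CommRing A]

/-- When `f (j + 1)` is the product of `x_j + v` over `v` in the span of `x_0, …, x_{j-1}`, this is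
the monic polynomial with roots the span of `x_0, …, x_{s-1}`, over the field with `q` elements. -/
noncomputable def subspacePoly (q : ℕ) (f : ℕ → A) : ℕ → Polynomial A
  | 0 => .X
  | s + 1 => subspacePoly q f s ^ q - .C (f (s + 1) ^ (q - 1)) * subspacePoly q f s

variable {q : ℕ} {f : ℕ → A}

theorem eval_subspacePoly_succ (s : ℕ) (T : A) :
    (subspacePoly q f (s + 1)).eval T = (subspacePoly q f s).eval T ^ q -
      f (s + 1) ^ (q - 1) * (subspacePoly q f s).eval T := by
  simp [subspacePoly]

theorem map_subspacePoly {B : Type*} [CommRing B] (φ : A →+* B) (s : ℕ) :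
    (subspacePoly q f s).map φ = subspacePoly q (φ ∘ f) s := by
  induction s with
  | zero => simp [subspacePoly]
  | succ s ih => simp [subspacePoly, ih]

theorem subspacePoly_monic_and_natDegree [Nontrivial A] (hq : 1 < q) (s : ℕ) :
    (subspacePoly q f s).Monic ∧ (subspacePoly q f s).natDegree = q ^ s := by
  induction s with
  | zero => exact ⟨Polynomial.monic_X, by simp [subspacePoly]⟩
  | succ s ih =>
    obtain ⟨monic, natDegree⟩ := ih
    have natDegree_pow : (subspacePoly q f s ^ q).natDegree = q ^ (s + 1) := by
      rw [monic.natDegree_pow, natDegree, pow_succ']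
    have lower : (.C (f (s + 1) ^ (q - 1)) * subspacePoly q f s).natDegree <
        (subspacePoly q f s ^ q).natDegree := by
      refine (Polynomial.natDegree_C_mul_le _ _).trans_lt ?_
      rw [natDegree_pow, natDegree]
      exact Nat.pow_lt_pow_succ hq
    exact ⟨(monic.pow q).sub_of_left (Polynomial.degree_lt_degree lower),
      (Polynomial.natDegree_sub_eq_left_of_natDegree_lt lower).trans natDegree_pow⟩

theorem isIntegral_of_eval_subspacePoly_mem [Nontrivial A] {R : Type*} [CommRing R] [Algebra R A]
    (B : Subalgebra R A) (hq : 1 < q) (hf : ∀ k, f k ∈ B) {s : ℕ} {T : A}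
    (h : (subspacePoly q f s).eval T ∈ B) : IsIntegral B T := by
  obtain ⟨monic, natDegree⟩ :=
    subspacePoly_monic_and_natDegree (f := fun k => (⟨f k, hf k⟩ : B)) hq s
  refine .of_aeval_monic monic (natDegree ▸ (pow_pos (by lia) s).ne') ?_
  rw [← Polynomial.eval_map_algebraMap, map_subspacePoly]
  exact isIntegral_algebraMap (x := (⟨_, h⟩ : B))

end SubspacePoly

section FiniteField

variable {F : Type*} [Field F] [Fintype F] {A : Type*} [CommRing A] [Algebra F A]

local notation "q" => Fintype.card F

theorem pow_card_pow_eq_frobeniusAlgHom (x : A) (t : ℕ) :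
    x ^ q ^ t = (FiniteField.frobeniusAlgHom F A ^ t) x := by
  induction t with
  | zero => simp
  | succ t ih =>
    rw [pow_succ, pow_mul, ih, pow_succ', AlgHom.mul_apply, pow_card_eq_frobeniusAlgHom]

theorem eval_subspacePoly (f : ℕ → A) (s : ℕ) (T : A) :
    (subspacePoly q f s).eval T =
      ∑ t ∈ Finset.range (s + 1), (-1) ^ (s + t) * subspaceCoeff q f s t * T ^ q ^ t := by
  induction s with
  | zero => simp [subspacePoly, subspaceCoeff]
  | succ s ih =>
    have power : (subspacePoly q f s).eval T ^ q = ∑ t ∈ Finset.range (s + 1),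
        (-1) ^ (s + t) * subspaceCoeff q f s t ^ q * T ^ q ^ (t + 1) := by
      simp only [ih, pow_card_eq_frobeniusAlgHom, map_sum, map_mul, map_pow, map_neg, map_one]
      simp only [← pow_card_eq_frobeniusAlgHom, ← pow_mul, pow_succ']
    have extended : (subspacePoly q f s).eval T = ∑ t ∈ Finset.range (s + 2),
        (-1) ^ (s + t) * subspaceCoeff q f s t * T ^ q ^ t := by
      rw [Finset.sum_range_succ, subspaceCoeff_of_lt Fintype.card_ne_zero (Nat.lt_succ_self s), ih]
      ring
    rw [eval_subspacePoly_succ, power, extended, Finset.sum_range_succ' _ (s + 1),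
      Finset.sum_range_succ' _ (s + 1), mul_add, ← sub_sub, Finset.mul_sum,
      ← Finset.sum_sub_distrib, sub_eq_add_neg]
    congr 1
    · refine Finset.sum_congr rfl fun t _ => ?_
      rw [subspaceCoeff]
      ring
    · rw [subspaceCoeff]
      ring

theorem eval_subspacePoly_add (f : ℕ → A) (s : ℕ) (T S : A) :
    (subspacePoly q f s).eval (T + S) =
      (subspacePoly q f s).eval T + (subspacePoly q f s).eval S := by
  induction s with
  | zero => simp [subspacePoly]
  | succ s ih =>
    simp only [eval_subspacePoly_succ, ih, pow_card_eq_frobeniusAlgHom (_ + _), map_add]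
    simp only [← pow_card_eq_frobeniusAlgHom]
    ring

theorem eval_subspacePoly_smul (f : ℕ → A) (s : ℕ) (a : F) (S : A) :
    (subspacePoly q f s).eval (a • S) = a • (subspacePoly q f s).eval S := by
  induction s with
  | zero => simp [subspacePoly]
  | succ s ih =>
    simp only [eval_subspacePoly_succ, ih, pow_card_eq_frobeniusAlgHom (_ • _), map_smul]
    simp only [← pow_card_eq_frobeniusAlgHom, mul_smul_comm, smul_sub]

variable (F) in
theorem prod_X_sub_C_univ :
    ∏ a : F, (Polynomial.X - Polynomial.C a) = Polynomial.X ^ q - Polynomial.X := by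
  have one_lt := Fintype.one_lt_card (α := F)
  have roots := FiniteField.roots_X_pow_card_sub_X F
  have monic : (Polynomial.X ^ q - Polynomial.X : Polynomial F).Monic :=
    Polynomial.monic_X_pow_sub (by rw [Polynomial.degree_X]; exact_mod_cast one_lt)
  have prod := Polynomial.prod_multiset_X_sub_C_of_monic_of_roots_card_eq monic (by
    rw [roots, FiniteField.X_pow_card_sub_X_natDegree_eq F one_lt]
    rfl)
  rwa [roots] at prod

theorem homogenize_X_pow_card_sub_X :
    (Polynomial.X ^ q - Polynomial.X : Polynomial F).homogenize q =
      ∏ a : F, (X 0 - C a * X 1) := by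
  have prod := Polynomial.homogenize_finsetProd (s := Finset.univ) (n := fun _ => 1)
    (p := fun a : F => Polynomial.X - Polynomial.C a) fun a _ => (Polynomial.natDegree_X_sub_C a).le
  rw [prod_X_sub_C_univ, Finset.sum_const, Finset.card_univ, smul_eq_mul, mul_one] at prod
  rw [prod]
  refine Finset.prod_congr rfl fun a _ => ?_
  rw [Polynomial.homogenize_sub, Polynomial.homogenize_X one_ne_zero, Polynomial.homogenize_C,
    Nat.sub_self, pow_zero, mul_one, pow_one]

theorem prod_add_smul (T S : A) : ∏ a : F, (T + a • S) = T ^ q - S ^ (q - 1) * T := by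
  have universal := homogenize_X_pow_card_sub_X (F := F)
  rw [Polynomial.homogenize_sub, Polynomial.homogenize_X_pow (le_refl q),
    Polynomial.homogenize_X Fintype.card_ne_zero, Nat.sub_self, pow_zero, mul_one] at universal
  have specialized := congrArg (aeval ![T, S]) universal
  simp only [map_sub, map_pow, map_mul, map_prod, aeval_X, aeval_C, Matrix.cons_val_zero,
    Matrix.cons_val_one] at specialized
  rw [mul_comm, specialized]
  exact Fintype.prod_equiv (Equiv.neg F) _ _ fun a => by simp [Algebra.smul_def]

variable (F) in
/-- The product of all translates of `T` by the `F`-span of `x 0, …, x (s - 1)`, with one factor for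
each linear combination. -/
def spanProd (x : ℕ → A) (s : ℕ) (T : A) : A :=
  ∏ α : Fin s → F, (T + ∑ i, α i • x i)

variable {f x : ℕ → A} {s : ℕ}

theorem spanProd_eq_eval_subspacePoly (hf : ∀ j < s, f (j + 1) = spanProd F x j (x j)) (T : A) :
    spanProd F x s T = (subspacePoly q f s).eval T := by
  induction s generalizing T with
  | zero => simp [spanProd, subspacePoly]
  | succ s ih =>
    replace ih := ih fun j hj => hf j (hj.trans (Nat.lt_succ_self s))
    rw [eval_subspacePoly_succ, ← prod_add_smul, hf s (Nat.lt_succ_self s), spanProd,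
      ← (Fin.snocEquiv fun _ : Fin (s + 1) => F).prod_comp, Fintype.prod_prod_type]
    refine Finset.prod_congr rfl fun a _ => ?_
    rw [ih, ← eval_subspacePoly_smul, ← eval_subspacePoly_add, ← ih]
    refine Finset.prod_congr rfl fun α _ => ?_
    simp only [Fin.snocEquiv, Equiv.coe_fn_mk, Fin.sum_univ_castSucc, Fin.snoc_castSucc,
      Fin.snoc_last, Fin.val_castSucc, Fin.val_last]
    ring

theorem eval_subspacePoly_of_lt (hf : ∀ j < s, f (j + 1) = spanProd F x j (x j)) {i : ℕ}
    (hi : i < s) : (subspacePoly q f s).eval (x i) = 0 := by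
  rw [← spanProd_eq_eval_subspacePoly hf]
  refine Finset.prod_eq_zero (Finset.mem_univ (Pi.single ⟨i, hi⟩ (-1))) ?_
  simp [Pi.single_apply]

end FiniteField

section PairingCoeff

variable {A : Type*} [CommRing A]

/-- The coefficients of the product of Frobenius twists of `subspacePoly q f s` and
`subspacePoly q g t`, as a polynomial in two variables. -/
def pairingCoeff (q : ℕ) (f g : ℕ → A) (a b s t : ℕ) (p : ℕ × ℕ) : A :=
  (-1) ^ (s + p.1 + (t + p.2)) *
    (subspaceCoeff q f s p.1 ^ q ^ a * subspaceCoeff q g t p.2 ^ q ^ b)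

variable {q : ℕ} {f g : ℕ → A} {a b s t : ℕ}

theorem pairingCoeff_self (hq : q ≠ 0) : pairingCoeff q f g a b s t (s, t) = 1 := by
  rw [pairingCoeff, subspaceCoeff_self hq, subspaceCoeff_self hq, one_pow, one_pow, mul_one,
    mul_one, pow_add, Even.neg_one_pow ⟨s, rfl⟩, Even.neg_one_pow ⟨t, rfl⟩, mul_one]

theorem map_pairingCoeff {B G : Type*} [CommRing B] [FunLike G A B] [RingHomClass G A B]
    (φ : G) (p : ℕ × ℕ) :
    φ (pairingCoeff q f g a b s t p) = pairingCoeff q (φ ∘ f) (φ ∘ g) a b s t p := by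
  simp [pairingCoeff, map_subspaceCoeff]

theorem pairingCoeff_mem {S : Type*} [SetLike S A] [SubringClass S A] {B : S}
    (hf : ∀ k < s, f (k + 1) ∈ B) (hg : ∀ k < t, g (k + 1) ∈ B) (p : ℕ × ℕ) :
    pairingCoeff q f g a b s t p ∈ B :=
  mul_mem (pow_mem (neg_mem (one_mem B)) _)
    (mul_mem (pow_mem (subspaceCoeff_mem hf _) _) (pow_mem (subspaceCoeff_mem hg _) _))

end PairingCoeff

section FiniteField

variable {K : Type*} [Field K] [Fintype K] {A : Type*} [CommRing A] [Algebra K A]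

local notation "q" => Fintype.card K

theorem eval_subspacePoly_pow (f : ℕ → A) (s a : ℕ) (T : A) :
    (subspacePoly q f s).eval T ^ q ^ a = ∑ i ∈ Finset.range (s + 1),
      (-1) ^ (s + i) * subspaceCoeff q f s i ^ q ^ a * T ^ q ^ (i + a) := by
  simp only [eval_subspacePoly, pow_card_pow_eq_frobeniusAlgHom _ a, map_sum, map_mul, map_pow,
    map_neg, map_one]
  simp only [← pow_card_pow_eq_frobeniusAlgHom, ← pow_mul, ← pow_add, add_comm a]

theorem sum_eval_subspacePoly_pow_mul_pow {ι : Type*} [Fintype ι] (f g : ℕ → A) (x y : ι → A)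
    (a b s t : ℕ) :
    ∑ m, (subspacePoly q f s).eval (x m) ^ q ^ a * (subspacePoly q g t).eval (y m) ^ q ^ b =
      ∑ p ∈ Finset.range (s + 1) ×ˢ Finset.range (t + 1), pairingCoeff q f g a b s t p *
        ∑ m, x m ^ q ^ (p.1 + a) * y m ^ q ^ (p.2 + b) := by
  simp only [Finset.mul_sum]
  rw [Finset.sum_comm]
  refine Finset.sum_congr rfl fun m _ => ?_
  rw [eval_subspacePoly_pow, eval_subspacePoly_pow, Finset.sum_mul_sum, ← Finset.sum_product']
  refine Finset.sum_congr rfl fun p _ => ?_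
  rw [pairingCoeff, pow_add]
  ring

end FiniteField

section Relations

local notation "q" => Fintype.card F

/-- The variables `x_{j+1}`, indexed from `0` and extended by zero. -/
noncomputable def xVar (j : ℕ) : MvPolynomial (Fin n ⊕ Fin n) F :=
  if h : j < n then X (Sum.inl ⟨j, h⟩) else 0

/-- The variables `y_{n-j}`, that is, the `y`'s in the reverse order used by the `f_k^*`, indexed
from `0` and extended by zero. -/
noncomputable def yVar (j : ℕ) : MvPolynomial (Fin n ⊕ Fin n) F :=
  if h : j < n then X (Sum.inr (Fin.rev ⟨j, h⟩)) else 0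

/-- The presentation ring `P`. -/
abbrev PresentationRing : Type :=
  MvPolynomial (Fin n ⊕ Fin n ⊕ Fin (2 * n - 3)) F

/-- The homomorphism `φ` of the presentation. -/
noncomputable def presentationMap :
    PresentationRing F n →ₐ[F] MvPolynomial (Fin n ⊕ Fin n) F :=
  aeval (Sum.elim (fun i : Fin n => fX F n (i.val + 1))
    (Sum.elim (fun i : Fin n => fY F n (i.val + 1))
      (fun m : Fin (2 * n - 3) => uInv F n ((m : ℤ) + 2 - n))))

/-- A `q`-power of a variable `Z`, chosen so that its image under `presentationMap` is
`∑ k, x_k ^ q ^ i * y_k ^ q ^ j`. -/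
noncomputable def zPow (i j : ℕ) : PresentationRing F n :=
  Zv F n (i - j) ^ q ^ min i j

/-- The common form of the three families of relations: for `s + t + 1 = n`, the relations
`R_{s+1}`, `R_{s+1}^+`, `R_{s+1}^-` are the cases `(a, b) = (0, 0), (1, 0), (0, 1)`. -/
noncomputable def relation (a b s t : ℕ) : PresentationRing F n :=
  ∑ p ∈ Finset.range (s + 1) ×ˢ Finset.range (t + 1),
    pairingCoeff q (Xv F n) (Yv F n) a b s t p * zPow F n (p.1 + a) (p.2 + b) -
  Xv F n (s + 1) ^ q ^ a * Yv F n (t + 1) ^ q ^ b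

variable {F n}

theorem fX_succ {j : ℕ} (hj : j < n) : fX F n (j + 1) = spanProd F (xVar F n) j (xVar F n j) := by
  rw [fX, dif_pos ⟨by lia, hj⟩]
  refine Finset.prod_congr rfl fun α _ => ?_
  simp only [xVar, hj, dif_pos, fun i : Fin j => i.isLt.trans hj, smul_eq_C_mul]
  rfl

theorem fY_succ {j : ℕ} (hj : j < n) : fY F n (j + 1) = spanProd F (yVar F n) j (yVar F n j) := by
  rw [fY, dif_pos ⟨by lia, hj⟩]
  refine Finset.prod_congr rfl fun α _ => ?_
  simp only [yVar, hj, dif_pos, fun i : Fin j => i.isLt.trans hj, smul_eq_C_mul, Fin.rev,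
    Nat.sub_sub, Nat.add_comm 1]
  rfl

omit [Fintype F] in
theorem X_inl_eq_xVar (m : Fin n) : X (Sum.inl m) = xVar F n m := by
  rw [xVar, dif_pos m.isLt]

omit [Fintype F] in
theorem X_inr_eq_yVar (m : Fin n) : X (Sum.inr m) = yVar F n m.rev := by
  rw [yVar, dif_pos m.rev.isLt, Fin.eta, Fin.rev_rev]

omit [Fintype F] in
theorem X_inl_eq_Xv (i : Fin n) :
    (X (Sum.inl i) : PresentationRing F n) = Xv F n (i + 1) := by
  rw [Xv, dif_pos ⟨by lia, i.isLt⟩]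
  rfl

omit [Fintype F] in
theorem X_inr_inl_eq_Yv (i : Fin n) :
    (X (Sum.inr (Sum.inl i)) : PresentationRing F n) = Yv F n (i + 1) := by
  rw [Yv, dif_pos ⟨by lia, i.isLt⟩]
  rfl

omit [Fintype F] in
theorem X_inr_inr_eq_Zv (m : Fin (2 * n - 3)) :
    (X (Sum.inr (Sum.inr m)) : PresentationRing F n) = Zv F n ((m : ℤ) + 2 - n) := by
  have := m.isLt
  rw [Zv, dif_pos ⟨by omega, by omega⟩]
  congr 3
  exact Fin.ext (by simp)

theorem presentationMap_comp_Xv : presentationMap F n ∘ Xv F n = fX F n := by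
  funext k
  by_cases h : 1 ≤ k ∧ k ≤ n
  · simp [Xv, h, presentationMap]
  · simp [Xv, fX, h]

theorem presentationMap_comp_Yv : presentationMap F n ∘ Yv F n = fY F n := by
  funext k
  by_cases h : 1 ≤ k ∧ k ≤ n
  · simp [Yv, h, presentationMap]
  · simp [Yv, fY, h]

theorem presentationMap_Zv {j : ℤ} (h : 2 - (n : ℤ) ≤ j ∧ j ≤ n - 2) :
    presentationMap F n (Zv F n j) = uInv F n j := by
  rw [Zv, dif_pos h, presentationMap, aeval_X, Sum.elim_inr, Sum.elim_inr]
  congr 1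
  lia

theorem uInv_pow (i j : ℕ) : uInv F n (i - j) ^ q ^ min i j =
    ∑ m : Fin n, X (Sum.inl m) ^ q ^ i * X (Sum.inr m) ^ q ^ j := by
  rw [uInv, pow_card_pow_eq_frobeniusAlgHom]
  split_ifs with h
  all_goals
    rw [map_sum]
    refine Finset.sum_congr rfl fun m _ => ?_
    rw [← pow_card_pow_eq_frobeniusAlgHom, mul_pow, ← pow_mul, ← pow_add]
    congr 3 <;> lia

theorem presentationMap_zPow {i j : ℕ} (h₁ : j + 2 ≤ n + i) (h₂ : i + 2 ≤ n + j) :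
    presentationMap F n (zPow F n i j) =
      ∑ m : Fin n, X (Sum.inl m) ^ q ^ i * X (Sum.inr m) ^ q ^ j := by
  rw [zPow, map_pow, presentationMap_Zv ⟨by lia, by lia⟩, uInv_pow]

variable {a b s t : ℕ}

theorem sum_eval_subspacePoly_mul (h : s + t + 1 = n) :
    ∑ m : Fin n, (subspacePoly q (fX F n) s).eval (X (Sum.inl m)) ^ q ^ a *
      (subspacePoly q (fY F n) t).eval (X (Sum.inr m)) ^ q ^ b =
        fX F n (s + 1) ^ q ^ a * fY F n (t + 1) ^ q ^ b := by
  have hX : ∀ j ≤ s, fX F n (j + 1) = spanProd F (xVar F n) j (xVar F n j) :=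
    fun j hj => fX_succ (by lia)
  have hY : ∀ j ≤ t, fY F n (j + 1) = spanProd F (yVar F n) j (yVar F n j) :=
    fun j hj => fY_succ (by lia)
  have pow_ne_zero (c : ℕ) : q ^ c ≠ 0 := pow_ne_zero c Fintype.card_ne_zero
  simp only [X_inl_eq_xVar, X_inr_eq_yVar]
  rw [Fintype.sum_eq_single ⟨s, by lia⟩]
  · have hrev : (Fin.rev (⟨s, by lia⟩ : Fin n) : ℕ) = t := by
      rw [Fin.val_rev]
      lia
    rw [hrev, ← spanProd_eq_eval_subspacePoly fun j hj => hX j hj.le,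
      ← spanProd_eq_eval_subspacePoly fun j hj => hY j hj.le, hX s le_rfl, hY t le_rfl]
  · intro m hm
    obtain hms | hsm := lt_or_gt_of_ne (Fin.val_ne_of_ne hm)
    · rw [eval_subspacePoly_of_lt (fun j hj => hX j hj.le) hms, zero_pow (pow_ne_zero a), zero_mul]
    · have hmt : (m.rev : ℕ) < t := by
        rw [Fin.val_rev]
        simp only at hsm
        lia
      rw [eval_subspacePoly_of_lt (fun j hj => hY j hj.le) hmt, zero_pow (pow_ne_zero b), mul_zero]

theorem presentationMap_relation (h : s + t + 1 = n) (h₁ : t + b + 2 ≤ n + a)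
    (h₂ : s + a + 2 ≤ n + b) : presentationMap F n (relation F n a b s t) = 0 := by
  have map_sum_terms : presentationMap F n (∑ p ∈ Finset.range (s + 1) ×ˢ Finset.range (t + 1),
      pairingCoeff q (Xv F n) (Yv F n) a b s t p * zPow F n (p.1 + a) (p.2 + b)) =
      ∑ m : Fin n, (subspacePoly q (fX F n) s).eval (X (Sum.inl m)) ^ q ^ a *
        (subspacePoly q (fY F n) t).eval (X (Sum.inr m)) ^ q ^ b := by
    rw [sum_eval_subspacePoly_pow_mul_pow, map_sum]
    refine Finset.sum_congr rfl fun p hp => ?_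
    rw [Finset.mem_product, Finset.mem_range, Finset.mem_range] at hp
    rw [map_mul, map_pairingCoeff, presentationMap_comp_Xv, presentationMap_comp_Yv,
      presentationMap_zPow (by lia) (by lia)]
  rw [relation, map_sub, map_sum_terms, sum_eval_subspacePoly_mul h, map_mul, map_pow, map_pow,
    ← presentationMap_comp_Xv, ← presentationMap_comp_Yv, Function.comp, Function.comp, sub_self]

theorem CXv_eq_subspaceCoeff {i : ℕ} (h : i ≤ s) : CXv F n s i = subspaceCoeff q (Xv F n) s i :=
  increasingSum_eq_subspaceCoeff h

theorem CYv_eq_subspaceCoeff {i : ℕ} (h : i ≤ s) : CYv F n s i = subspaceCoeff q (Yv F n) s i :=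
  increasingSum_eq_subspaceCoeff h

theorem relation_eq_sum (h : s + t + 1 = n) : relation F n a b s t =
    ∑ i ∈ Finset.range (s + 1), ∑ j ∈ Finset.range (t + 1),
      (-1) ^ (i + j + n + 1) * CXv F n s i ^ q ^ a * CYv F n t j ^ q ^ b *
        Zv F n (i - j + a - b) ^ q ^ min (i + a) (j + b) -
    Xv F n (s + 1) ^ q ^ a * Yv F n (t + 1) ^ q ^ b := by
  rw [relation, Finset.sum_product]
  refine congrArg (· - _) (Finset.sum_congr rfl fun i hi => Finset.sum_congr rfl fun j hj => ?_)
  have sign : (-1 : PresentationRing F n) ^ (i + j + n + 1) = (-1) ^ (s + i + (t + j)) := by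
    rw [show i + j + n + 1 = s + i + (t + j) + 2 by lia, pow_add, neg_one_sq, mul_one]
  have index : ((i + a : ℕ) - (j + b : ℕ) : ℤ) = i - j + a - b := by
    push_cast
    ring
  rw [CXv_eq_subspaceCoeff (Finset.mem_range_succ_iff.1 hi),
    CYv_eq_subspaceCoeff (Finset.mem_range_succ_iff.1 hj), pairingCoeff, zPow, index, sign,
    ← mul_assoc]

theorem Rv_succ (h : s + t + 1 = n) : Rv F n (s + 1) = relation F n 0 0 s t := by
  rw [relation_eq_sum h, Rv, show n - (s + 1) = t by lia, show n + 1 - (s + 1) = t + 1 by lia]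
  simp

theorem RvPlus_succ (h : s + t + 1 = n) : RvPlus F n (s + 1) = relation F n 1 0 s t := by
  rw [relation_eq_sum h, RvPlus, show n - (s + 1) = t by lia, show n + 1 - (s + 1) = t + 1 by lia]
  simp

theorem RvMinus_succ (h : s + t + 1 = n) : RvMinus F n (s + 1) = relation F n 0 1 s t := by
  rw [relation_eq_sum h, RvMinus, show n - (s + 1) = t by lia, show n + 1 - (s + 1) = t + 1 by lia]
  simp

end Relations

section LeadingMonomials

/-- The weight `0` on the `X`'s and `Y`'s, and `q ^ |j| + 1` on `Z_j`. This makes the factor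
`zPow F n i j` of the terms of a relation have weight `q ^ i + q ^ j`. -/
def zWeight (q n : ℕ) : Fin n ⊕ Fin n ⊕ Fin (2 * n - 3) → ℕ :=
  Sum.elim 0 (Sum.elim 0 fun m => q ^ ((m : ℤ) + 2 - n).natAbs + 1)

theorem pow_min_mul_pow_natAbs_add_one (q i j : ℕ) :
    q ^ min i j * (q ^ ((i : ℤ) - j).natAbs + 1) = q ^ i + q ^ j := by
  obtain h | h := le_total i j
  · rw [min_eq_left h, mul_add, ← pow_add, mul_one, add_comm,
      show i + ((i : ℤ) - j).natAbs = j by lia]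
  · rw [min_eq_right h, mul_add, ← pow_add, mul_one, show j + ((i : ℤ) - j).natAbs = i by lia]

local notation "q" => Fintype.card F

variable {F n}

theorem Xv_mem_weightZero (k : ℕ) : Xv F n k ∈ weightZero F (zWeight q n) := by
  rw [Xv]
  split_ifs
  · exact X_mem_weightZero rfl
  · exact zero_mem _

theorem Yv_mem_weightZero (k : ℕ) : Yv F n k ∈ weightZero F (zWeight q n) := by
  rw [Yv]
  split_ifs
  · exact X_mem_weightZero rfl
  · exact zero_mem _

theorem Zv_mem_weightLT (j : ℤ) : Zv F n j ∈ weightLT F (zWeight q n) (q ^ j.natAbs + 1 + 1) := by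
  rw [Zv]
  split_ifs with h
  · convert X_mem_weightLT (R := F) (w := zWeight q n) _ using 2
    rw [zWeight, Sum.elim_inr, Sum.elim_inr]
    congr 3
    lia
  · exact zero_mem _

theorem zPow_mem_weightLT (i j : ℕ) :
    zPow F n i j ∈ weightLT F (zWeight q n) (q ^ i + q ^ j + 1) := by
  rw [← pow_min_mul_pow_natAbs_add_one]
  exact pow_mem_weightLT (Zv_mem_weightLT _) _

variable {a b s t : ℕ}

theorem relation_sub_zPow_mem_weightLT :
    relation F n a b s t - zPow F n (s + a) (t + b) ∈
      weightLT F (zWeight q n) (q ^ (s + a) + q ^ (t + b)) := by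
  have one_lt : 1 < q := Fintype.one_lt_card
  rw [relation, ← Finset.add_sum_erase (a := (s, t)) _ _ (by simp),
    pairingCoeff_self Fintype.card_ne_zero, one_mul, add_sub_assoc, add_sub_cancel_left]
  refine sub_mem (sum_mem fun p hp => ?_) ?_
  · simp only [Finset.mem_erase, Finset.mem_product, Finset.mem_range, ne_eq, Prod.ext_iff] at hp
    have coeff_mem : pairingCoeff q (Xv F n) (Yv F n) a b s t p ∈ weightZero F (zWeight q n) :=
      pairingCoeff_mem (fun _ _ => Xv_mem_weightZero _) (fun _ _ => Yv_mem_weightZero _) p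
    refine weightLT_mono ?_ (mul_mem_weightLT coeff_mem (zPow_mem_weightLT _ _))
    have hi : q ^ (p.1 + a) ≤ q ^ (s + a) := Nat.pow_le_pow_right one_lt.le (by lia)
    have hj : q ^ (p.2 + b) ≤ q ^ (t + b) := Nat.pow_le_pow_right one_lt.le (by lia)
    obtain hi' | hj' : p.1 < s ∨ p.2 < t := by lia
    · have := Nat.pow_lt_pow_right one_lt (Nat.add_lt_add_right hi' a)
      lia
    · have := Nat.pow_lt_pow_right one_lt (Nat.add_lt_add_right hj' b)
      lia
  · have := pow_pos (zero_lt_one.trans one_lt) (s + a)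
    exact weightLT_mono (by lia) (mem_weightZero.1
      (mul_mem (pow_mem (Xv_mem_weightZero _) _) (pow_mem (Yv_mem_weightZero _) _)))

theorem hasLeadMonomial_relation {m : Fin (2 * n - 3)}
    (hm : (m : ℤ) + 2 - n = (s + a : ℕ) - (t + b : ℕ)) :
    HasLeadMonomial (zWeight q n) (relation F n a b s t)
      (Finsupp.single (Sum.inr (Sum.inr m)) (q ^ min (s + a) (t + b))) := by
  have zPow_eq : zPow F n (s + a) (t + b) =
      monomial (Finsupp.single (Sum.inr (Sum.inr m)) (q ^ min (s + a) (t + b))) 1 := by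
    rw [zPow, ← hm, ← X_inr_inr_eq_Zv, X_pow_eq_monomial]
  rw [HasLeadMonomial, Finsupp.weight_single, ← zPow_eq, smul_eq_mul, zWeight, Sum.elim_inr,
    Sum.elim_inr, hm, pow_min_mul_pow_natAbs_add_one]
  exact relation_sub_zPow_mem_weightLT

end LeadingMonomials

section RelationIdeal

local notation "q" => Fintype.card F

/-- The ideal generated by `R_1^+`, `R_2, …, R_{n-1}` and `R_3^-, …, R_n^-`. -/
noncomputable def relationIdeal : Ideal (PresentationRing F n) :=
  Ideal.span ({RvPlus F n 1} ∪ {p | ∃ k, (2 ≤ k ∧ k ≤ n - 1) ∧ p = Rv F n k} ∪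
    {p | ∃ k, (3 ≤ k ∧ k ≤ n) ∧ p = RvMinus F n k})

/-- The generators of `relationIdeal` in the order `R_1^+, R_2, R_3^-, R_3, …, R_n^-`, so that a
power of the `m`-th variable `Z` is the leading monomial of the `m`-th generator. -/
noncomputable def generator (m : ℕ) : PresentationRing F n :=
  if m = 0 then RvPlus F n 1
  else if Odd m then Rv F n ((m + 3) / 2)
  else RvMinus F n ((m + 4) / 2)

variable {F n}

theorem relationIdeal_eq_span_range_generator (hn : 3 ≤ n) :
    relationIdeal F n = Ideal.span (Set.range fun m : Fin (2 * n - 3) => generator F n m) := by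
  rw [relationIdeal]
  congr 1
  ext p
  constructor
  · rintro ((h | ⟨k, hk, rfl⟩) | ⟨k, hk, rfl⟩)
    · exact ⟨⟨0, by lia⟩, by simpa [generator] using h.symm⟩
    · refine ⟨⟨2 * k - 3, by lia⟩, ?_⟩
      dsimp only
      rw [generator, if_neg (by lia), if_pos ⟨k - 2, by lia⟩]
      congr 1
      lia
    · refine ⟨⟨2 * k - 4, by lia⟩, ?_⟩
      dsimp only
      rw [generator, if_neg (by lia), if_neg (Nat.not_odd_iff_even.2 ⟨k - 2, by lia⟩)]
      congr 1
      lia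
  · rintro ⟨m, rfl⟩
    simp only [generator]
    split_ifs with h₀ h₁
    · exact .inl (.inl rfl)
    · exact .inl (.inr ⟨_, by grind, rfl⟩)
    · exact .inr ⟨_, by grind, rfl⟩

theorem exists_generator_eq_relation (hn : 3 ≤ n) (m : Fin (2 * n - 3)) :
    ∃ a b s t, s + t + 1 = n ∧ t + b + 2 ≤ n + a ∧ s + a + 2 ≤ n + b ∧
      (m : ℤ) + 2 - n = (s + a : ℕ) - (t + b : ℕ) ∧ generator F n m = relation F n a b s t := by
  rw [generator]
  split_ifs with h₀ h₁
  · exact ⟨1, 0, 0, n - 1, by lia, by lia, by lia, by lia, RvPlus_succ (by lia)⟩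
  · obtain ⟨i, hi⟩ := h₁
    refine ⟨0, 0, i + 1, n - i - 2, by lia, by lia, by lia, by lia, ?_⟩
    rw [← Rv_succ (by lia)]
    congr 1
    lia
  · obtain ⟨i, hi⟩ := Nat.not_odd_iff_even.1 h₁
    refine ⟨0, 1, i + 1, n - i - 2, by lia, by lia, by lia, by lia, ?_⟩
    rw [← RvMinus_succ (by lia)]
    congr 1
    lia

theorem relationIdeal_le_ker (hn : 3 ≤ n) :
    relationIdeal F n ≤ RingHom.ker (presentationMap F n) := by
  rw [relationIdeal_eq_span_range_generator hn, Ideal.span_le]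
  rintro _ ⟨m, rfl⟩
  obtain ⟨a, b, s, t, h, h₁, h₂, -, generator_eq⟩ := exists_generator_eq_relation (F := F) hn m
  simpa only [SetLike.mem_coe, RingHom.mem_ker, generator_eq] using
    presentationMap_relation h h₁ h₂

theorem mem_relationIdeal_of_X_mul_mem (hn : 3 ≤ n) (i : Fin n) {p : PresentationRing F n}
    (h : X (Sum.inl i) * p ∈ relationIdeal F n) : p ∈ relationIdeal F n := by
  have lead (m : Fin (2 * n - 3)) : ∃ e > 0, HasLeadMonomial (zWeight q n) (generator F n m)
      (Finsupp.single (Sum.inr (Sum.inr m)) e) := by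
    obtain ⟨a, b, s, t, -, -, -, hm, generator_eq⟩ := exists_generator_eq_relation (F := F) hn m
    exact ⟨_, pow_pos Fintype.card_pos _, generator_eq ▸ hasLeadMonomial_relation hm⟩
  choose e e_pos lead using lead
  let r : Fin n ⊕ Fin n ⊕ Fin (2 * n - 3) → PresentationRing F n :=
    Sum.elim (fun i => X (Sum.inl i)) (Sum.elim (fun i => X (Sum.inr (Sum.inl i)))
      fun m => generator F n m)
  have relationIdeal_eq : relationIdeal F n =
      Ideal.span (r '' Set.range fun m => Sum.inr (Sum.inr m)) := by
    rw [relationIdeal_eq_span_range_generator hn, ← Set.range_comp]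
    rfl
  rw [relationIdeal_eq] at h ⊢
  refine mem_span_of_mul_mem (w := zWeight q n) (e := Sum.elim 1 (Sum.elim 1 e)) (k := Sum.inl i)
    ?_ ?_ (by simp) h
  · rintro (_ | _ | m)
    exacts [one_pos, one_pos, e_pos m]
  · rintro (_ | _ | m)
    exacts [.X _, .X _, lead m]

end RelationIdeal

section Elimination

local notation "q" => Fintype.card F

/-- The multiplicative set generated by the variables `X`; inverting it makes the relations solvable
for the variables `Y_2, …, Y_n` and `Z_j`, `j < 0`. -/
noncomputable def xMonoid : Submonoid (PresentationRing F n) :=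
  Submonoid.closure (Set.range fun i : Fin n => X (Sum.inl i))

variable {F n} {a s t : ℕ}

omit [Fintype F] in
theorem Xv_succ_mem_xMonoid (h : s < n) : Xv F n (s + 1) ∈ xMonoid F n :=
  X_inl_eq_Xv (F := F) ⟨s, h⟩ ▸ Submonoid.subset_closure ⟨_, rfl⟩

theorem mem_relationIdeal_of_xMonoid_mul_mem (hn : 3 ≤ n) {d : PresentationRing F n}
    (hd : d ∈ xMonoid F n) {p : PresentationRing F n} (h : d * p ∈ relationIdeal F n) :
    p ∈ relationIdeal F n := by
  induction hd using Submonoid.closure_induction generalizing p with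
  | mem _ hd =>
    obtain ⟨i, rfl⟩ := hd
    exact mem_relationIdeal_of_X_mul_mem hn i h
  | one => rwa [one_mul] at h
  | mul _ _ _ _ ih₁ ih₂ => exact ih₂ (ih₁ (mul_assoc (G := PresentationRing F n) _ _ _ ▸ h))

theorem subspaceCoeff_zero_mem_xMonoid (h : s ≤ n) :
    subspaceCoeff q (Xv F n) s 0 ∈ xMonoid F n := by
  rw [subspaceCoeff_zero_right]
  exact prod_mem fun k hk => pow_mem (Xv_succ_mem_xMonoid (by grind)) _

theorem relation_one_zero_mem_relationIdeal (h : t + 1 = n) :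
    relation F n 1 0 0 t ∈ relationIdeal F n :=
  Ideal.subset_span (.inl (.inl (RvPlus_succ (by lia)).symm))

theorem relation_zero_zero_mem_relationIdeal (h : s + t + 1 = n) (hs : 1 ≤ s) (ht : 1 ≤ t) :
    relation F n 0 0 s t ∈ relationIdeal F n :=
  Ideal.subset_span (.inl (.inr ⟨s + 1, by lia, (Rv_succ h).symm⟩))

theorem relation_zero_one_mem_relationIdeal (h : s + t + 1 = n) (hs : 2 ≤ s) :
    relation F n 0 1 s t ∈ relationIdeal F n :=
  Ideal.subset_span (.inr ⟨s + 1, by lia, (RvMinus_succ h).symm⟩)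

variable {G : Subalgebra F (PresentationRing F n)} (xMonoid_le : ∀ x ∈ xMonoid F n, x ∈ G)
  (mem_of_mul_mem : ∀ x ∈ xMonoid F n, ∀ p, x * p ∈ G → p ∈ G)

include xMonoid_le

theorem pairingCoeff_mem_of_xMonoid_le {b : ℕ} (hs : s ≤ n) (hY : ∀ k < t, Yv F n (k + 1) ∈ G)
    (p : ℕ × ℕ) : pairingCoeff q (Xv F n) (Yv F n) a b s t p ∈ G :=
  pairingCoeff_mem (fun _ hk => xMonoid_le _ (Xv_succ_mem_xMonoid (hk.trans_le hs))) hY p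

include mem_of_mul_mem

theorem Yv_succ_mem_of_relation_mem (h : s + t + 1 = n) (hr : relation F n a 0 s t ∈ G)
    (hY : ∀ k < t, Yv F n (k + 1) ∈ G) (hZ : ∀ j : ℤ, a - t ≤ j → Zv F n j ∈ G) :
    Yv F n (t + 1) ∈ G := by
  refine mem_of_mul_mem (Xv F n (s + 1) ^ q ^ a) (pow_mem (Xv_succ_mem_xMonoid (by lia)) _) _ ?_
  rw [relation, pow_zero, pow_one] at hr
  rw [← sub_sub_cancel (∑ p ∈ _, _) (Xv F n (s + 1) ^ q ^ a * Yv F n (t + 1))]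
  refine sub_mem (sum_mem fun p hp => ?_) hr
  refine mul_mem (pairingCoeff_mem_of_xMonoid_le xMonoid_le (by lia) hY p) (pow_mem (hZ _ ?_) _)
  grind

theorem Zv_mem_of_relation_mem (h : s + t + 1 = n) (hr : relation F n 0 1 s t ∈ G)
    (hY : ∀ k ≤ t, Yv F n (k + 1) ∈ G) (hZ : ∀ j : ℤ, -t ≤ j → Zv F n j ∈ G) :
    Zv F n (-t - 1) ∈ G := by
  have coeff_mem (p : ℕ × ℕ) : pairingCoeff q (Xv F n) (Yv F n) 0 1 s t p ∈ G :=
    pairingCoeff_mem_of_xMonoid_le xMonoid_le (by lia) (fun k hk => hY k hk.le) p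
  have leading_mem : pairingCoeff q (Xv F n) (Yv F n) 0 1 s t (0, t) * zPow F n 0 (t + 1) ∈ G := by
    rw [relation, ← Finset.add_sum_erase (a := (0, t)) _ _ (by simp), add_sub_assoc] at hr
    refine (add_mem_cancel_right (sub_mem (sum_mem fun p hp => ?_) ?_)).1 hr
    · exact mul_mem (coeff_mem p) (pow_mem (hZ _ (by grind)) _)
    · exact mul_mem (pow_mem (xMonoid_le _ (Xv_succ_mem_xMonoid (by lia))) _)
        (pow_mem (hY t le_rfl) _)
  have zPow_eq : zPow F n 0 (t + 1) = Zv F n (-t - 1) := by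
    rw [zPow, min_eq_left zero_le, pow_zero, pow_one]
    congr 1
    lia
  rw [pairingCoeff, subspaceCoeff_self Fintype.card_ne_zero, one_pow, mul_one, pow_zero, pow_one,
    zPow_eq, mul_assoc] at leading_mem
  refine mem_of_mul_mem _ (subspaceCoeff_zero_mem_xMonoid (by lia : s ≤ n)) _ ?_
  simpa [← mul_assoc, ← mul_pow] using
    mul_mem (pow_mem (neg_mem (one_mem G)) (s + 0 + (t + t))) leading_mem

variable (relationIdeal_le : ∀ p ∈ relationIdeal F n, p ∈ G) (hY : Yv F n 1 ∈ G)
  (hZ : ∀ j : ℤ, 0 ≤ j → Zv F n j ∈ G)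

include relationIdeal_le hY hZ

theorem Yv_Zv_mem_of_relationIdeal_le (t : ℕ) (ht : t + 2 ≤ n) :
    (∀ k ≤ t, Yv F n (k + 1) ∈ G) ∧ ∀ j : ℤ, -t ≤ j → Zv F n j ∈ G := by
  induction t with
  | zero => exact ⟨fun k hk => Nat.le_zero.1 hk ▸ hY, by simpa using hZ⟩
  | succ t ih =>
    obtain ⟨ihY, ihZ⟩ := ih (by lia)
    obtain ⟨s, rfl⟩ : ∃ s, n = s + (t + 1) + 1 := ⟨n - t - 2, by lia⟩
    have hZ' : ∀ j : ℤ, -(t + 1 : ℕ) ≤ j → Zv F _ j ∈ G := fun j hj => by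
      obtain hj | rfl : -(t : ℤ) ≤ j ∨ j = -t - 1 := by lia
      · exact ihZ j hj
      · exact Zv_mem_of_relation_mem xMonoid_le mem_of_mul_mem (s := s + 1) (by lia)
          (relationIdeal_le _ (relation_zero_one_mem_relationIdeal (by lia) (by lia))) ihY ihZ
    refine ⟨fun k hk => ?_, hZ'⟩
    obtain hk | rfl := Nat.le_succ_iff.1 hk
    · exact ihY k hk
    · exact Yv_succ_mem_of_relation_mem xMonoid_le mem_of_mul_mem rfl
        (relationIdeal_le _ (relation_zero_zero_mem_relationIdeal rfl (by lia) (by lia)))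
        (fun k hk => ihY k (by lia)) (by simpa using hZ')

theorem eq_top_of_relationIdeal_le (hn : 3 ≤ n) : G = ⊤ := by
  obtain ⟨hY', hZ'⟩ := Yv_Zv_mem_of_relationIdeal_le xMonoid_le mem_of_mul_mem relationIdeal_le
    hY hZ (n - 2) (by lia)
  rw [← top_le_iff, ← MvPolynomial.adjoin_range_X, Algebra.adjoin_le_iff]
  rintro _ ⟨i | i | m, rfl⟩
  · exact xMonoid_le _ (Submonoid.subset_closure ⟨i, rfl⟩)
  · rw [X_inr_inl_eq_Yv]
    obtain hi | hi : i.val ≤ n - 2 ∨ i.val = n - 1 := by lia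
    · exact hY' i hi
    · exact hi ▸ Yv_succ_mem_of_relation_mem xMonoid_le mem_of_mul_mem (a := 1) (s := 0) (by lia)
        (relationIdeal_le _ (relation_one_zero_mem_relationIdeal (by lia)))
        (fun k hk => hY' k (by lia)) fun j hj => hZ' j (by lia)
  · rw [X_inr_inr_eq_Zv]
    exact hZ' _ (by lia)

end Elimination

section FreeVariables

/-- The embedding of the variables that survive the elimination: its values are
`X_1, …, X_n, Y_1, Z_0, …, Z_{n-2}`. -/
def freeVar : Fin n ⊕ Fin n → Fin n ⊕ Fin n ⊕ Fin (2 * n - 3) :=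
  Sum.map id fun j => if h : j.val = 0 then .inl j else .inr ⟨j + n - 3, by lia⟩

variable {F n}

omit [Fintype F] in
theorem Yv_one_mem_range_rename_freeVar :
    Yv F n 1 ∈ (rename (R := F) (freeVar n)).range := by
  by_cases h : 1 ≤ n
  · rw [Yv, dif_pos ⟨le_rfl, h⟩]
    exact (AlgHom.mem_range _).2 ⟨X (Sum.inr ⟨0, h⟩), rename_X _ _⟩
  · rw [Yv, dif_neg (by lia)]
    exact zero_mem _

omit [Fintype F] in
theorem Zv_mem_range_rename_freeVar {j : ℤ} (hj : 0 ≤ j) :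
    Zv F n j ∈ (rename (R := F) (freeVar n)).range := by
  rw [Zv]
  split_ifs with h
  · refine (AlgHom.mem_range _).2 ⟨X (Sum.inr ⟨j.toNat + 1, by lia⟩), ?_⟩
    rw [rename_X, freeVar, Sum.map_inr, dif_neg (by simp)]
    congr 3
    exact Fin.ext (by grind)
  · exact zero_mem _

omit [Fintype F] in
theorem xMonoid_le_range_rename_freeVar :
    xMonoid F n ≤ (rename (R := F) (freeVar n)).range.toSubmonoid :=
  Submonoid.closure_le.2 (Set.range_subset_iff.2 fun i => ⟨X (.inl i), rename_X _ _⟩)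

theorem exists_xMonoid_mul_sub_rename_mem (hn : 3 ≤ n) (p : PresentationRing F n) :
    ∃ d ∈ xMonoid F n, ∃ b, d * p - rename (freeVar n) b ∈ relationIdeal F n := by
  let S : Subalgebra F (PresentationRing F n) :=
    ((rename (freeVar n)).range.map (Ideal.Quotient.mkₐ F (relationIdeal F n))).comap
      (Ideal.Quotient.mkₐ F (relationIdeal F n))
  have range_le : (rename (R := F) (freeVar n)).range ≤ S := fun p hp =>
    Subalgebra.mem_map.2 ⟨p, hp, rfl⟩
  have relationIdeal_le : ∀ p ∈ relationIdeal F n, p ∈ S := fun p hp =>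
    Subalgebra.mem_map.2 ⟨0, zero_mem _, by simpa using (Ideal.Quotient.eq_zero_iff_mem.2 hp).symm⟩
  have xMonoid_le : xMonoid F n ≤ S.toSubmonoid :=
    xMonoid_le_range_rename_freeVar.trans range_le
  have le_saturation := Subalgebra.le_saturation (H := xMonoid_le)
  have saturation_eq_top := eq_top_of_relationIdeal_le (G := S.saturation _ xMonoid_le)
    (fun x hx => le_saturation (xMonoid_le hx))
    (fun x hx p hp => Subalgebra.mem_saturation_of_mul_mem_left hp hx)
    (fun p hp => le_saturation (relationIdeal_le p hp))
    (le_saturation (range_le Yv_one_mem_range_rename_freeVar))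
    (fun j hj => le_saturation (range_le (Zv_mem_range_rename_freeVar hj))) hn
  obtain ⟨d, hd, hp⟩ : p ∈ S.saturation _ xMonoid_le := saturation_eq_top ▸ Algebra.mem_top
  obtain ⟨_, ⟨b, rfl⟩, hb⟩ := Subalgebra.mem_map.1 hp
  exact ⟨d, hd, b, Ideal.Quotient.eq.1 hb.symm⟩

end FreeVariables

section AlgebraicIndependence

theorem algebraicIndependent_of_isAlgebraic_X {ι K : Type*} [Finite ι] [Field K]
    {v : ι → MvPolynomial ι K}
    (h : ∀ i, IsAlgebraic (Algebra.adjoin K (Set.range v)) (X i : MvPolynomial ι K)) :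
    AlgebraicIndependent K v := by
  have := (IsTranscendenceBasis.mvPolynomial ι K).isAlgebraic_iff.2 h
  refine (Algebra.IsAlgebraic.isTranscendenceBasis_of_lift_le_trdeg_of_finite K v ?_).1
  simp [MvPolynomial.trdeg_of_isDomain]

theorem isAlgebraic_of_eq_spanProd {F R A : Type*} [Field F] [Fintype F] [CommRing R] [IsDomain R]
    [CommRing A] [IsDomain A] [Algebra F A] [Algebra R A] {f x : ℕ → A} {n : ℕ}
    (hf : ∀ j < n, f (j + 1) = spanProd F x j (x j)) (h : ∀ k, IsAlgebraic R (f k)) {j : ℕ}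
    (hj : j < n) : IsAlgebraic R (x j) := by
  have integral : IsIntegral (Subalgebra.algebraicClosure R A) (x j) := by
    refine isIntegral_of_eval_subspacePoly_mem _ (Fintype.one_lt_card (α := F)) h (s := j) ?_
    rw [← spanProd_eq_eval_subspacePoly fun i hi => hf i (hi.trans hj), ← hf j hj]
    exact h (j + 1)
  exact integral.isAlgebraic.restrictScalars R

/-- The images `f_1, …, f_n, f_1^*, u_0, …, u_{n-2}` of the surviving variables. -/
noncomputable def freeImage (i : Fin n ⊕ Fin n) : MvPolynomial (Fin n ⊕ Fin n) F :=
  presentationMap F n (X (freeVar n i))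

variable {F n}

theorem aeval_freeImage (b : MvPolynomial (Fin n ⊕ Fin n) F) :
    aeval (freeImage F n) b = presentationMap F n (rename (freeVar n) b) := by
  rw [← AlgHom.comp_apply]
  congr 1
  ext i
  simp [freeImage]

theorem fX_succ_ne_zero {j : ℕ} (hj : j < n) : fX F n (j + 1) ≠ 0 := by
  classical
  rw [fX_succ hj]
  refine Finset.prod_ne_zero_iff.2 fun α _ factor_eq_zero => ?_
  have eval_eq_zero := congrArg (eval (Pi.single (Sum.inl ⟨j, hj⟩) 1)) factor_eq_zero
  rw [map_zero, map_add, map_sum, Finset.sum_eq_zero, xVar, dif_pos hj, eval_X, Pi.single_eq_same,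
    add_zero] at eval_eq_zero
  · exact one_ne_zero eval_eq_zero
  · intro i _
    simp [xVar, i.isLt.trans hj, smul_eq_C_mul, i.isLt.ne]

theorem presentationMap_ne_zero_of_mem_xMonoid {d : PresentationRing F n} (hd : d ∈ xMonoid F n) :
    presentationMap F n d ≠ 0 := by
  induction hd using Submonoid.closure_induction with
  | mem _ h =>
    obtain ⟨i, rfl⟩ := h
    simpa [presentationMap] using fX_succ_ne_zero i.isLt
  | one => simp
  | mul _ _ _ _ h₁ h₂ => simpa using ⟨h₁, h₂⟩

theorem presentationMap_mem_adjoin_freeImage {p : PresentationRing F n}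
    (hp : p ∈ (rename (freeVar n)).range) :
    presentationMap F n p ∈ Algebra.adjoin F (Set.range (freeImage F n)) := by
  obtain ⟨b, rfl⟩ := (AlgHom.mem_range _).1 hp
  rw [Algebra.adjoin_range_eq_range_aeval, ← aeval_freeImage]
  exact AlgHom.mem_range_self _ b

theorem isAlgebraic_presentationMap (hn : 3 ≤ n) (p : PresentationRing F n) :
    IsAlgebraic (Algebra.adjoin F (Set.range (freeImage F n))) (presentationMap F n p) := by
  have isAlgebraic_of_mem {a : MvPolynomial (Fin n ⊕ Fin n) F}
      (ha : a ∈ Algebra.adjoin F (Set.range (freeImage F n))) :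
      IsAlgebraic (Algebra.adjoin F (Set.range (freeImage F n))) a :=
    isAlgebraic_algebraMap (⟨a, ha⟩ : Algebra.adjoin F (Set.range (freeImage F n)))
  obtain ⟨d, hd, b, hb⟩ := exists_xMonoid_mul_sub_rename_mem hn p
  have map_mul_eq : presentationMap F n d * presentationMap F n p =
      presentationMap F n (rename (freeVar n) b) := by
    rw [← map_mul, ← sub_eq_zero, ← map_sub]
    exact relationIdeal_le_ker hn hb
  refine IsAlgebraic.of_mul
    (mem_nonZeroDivisors_of_ne_zero (presentationMap_ne_zero_of_mem_xMonoid hd))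
    (isAlgebraic_of_mem (presentationMap_mem_adjoin_freeImage (xMonoid_le_range_rename_freeVar hd)))
    (map_mul_eq ▸ isAlgebraic_of_mem (presentationMap_mem_adjoin_freeImage ⟨b, rfl⟩))

theorem algebraicIndependent_freeImage (hn : 3 ≤ n) : AlgebraicIndependent F (freeImage F n) := by
  refine algebraicIndependent_of_isAlgebraic_X fun i => ?_
  obtain i | i := i
  · rw [X_inl_eq_xVar]
    refine isAlgebraic_of_eq_spanProd (fun _ => fX_succ) (fun k => ?_) i.isLt
    rw [← presentationMap_comp_Xv]
    exact isAlgebraic_presentationMap hn _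
  · rw [X_inr_eq_yVar]
    refine isAlgebraic_of_eq_spanProd (fun _ => fY_succ) (fun k => ?_) i.rev.isLt
    rw [← presentationMap_comp_Yv]
    exact isAlgebraic_presentationMap hn _

end AlgebraicIndependence

/-- Theorem (main, part (a), relations): for `n ≥ 3`, the kernel of the presentation map
`φ : P → F_q[V ⊕ V*]`, `X_i ↦ f_i`, `Y_i ↦ f_i^*`, `Z_j ↦ u_j`, is generated by the `2n-3`
relations `R_1^+, R_2, R_3^-, R_3, R_4^-, R_4, …, R_{n-1}^-, R_{n-1}, R_n^-`. -/
theorem ker_presentation_Un (hn : 3 ≤ n) :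
    RingHom.ker (aeval (R := F) (Sum.elim (fun i : Fin n => fX F n (i.val + 1))
        (Sum.elim (fun i : Fin n => fY F n (i.val + 1))
          (fun m : Fin (2 * n - 3) => uInv F n ((m : ℤ) + 2 - n)))) :
        MvPolynomial (Fin n ⊕ Fin n ⊕ Fin (2 * n - 3)) F →+* MvPolynomial (Fin n ⊕ Fin n) F)
      = Ideal.span ({RvPlus F n 1} ∪
          {p | ∃ k, (2 ≤ k ∧ k ≤ n - 1) ∧ p = Rv F n k} ∪
          {p | ∃ k, (3 ≤ k ∧ k ≤ n) ∧ p = RvMinus F n k}) := by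
  change RingHom.ker (presentationMap F n) = relationIdeal F n
  refine le_antisymm (fun p hp => ?_) (relationIdeal_le_ker hn)
  obtain ⟨d, hd, b, hb⟩ := exists_xMonoid_mul_sub_rename_mem hn p
  have b_eq_zero : b = 0 := by
    refine algebraicIndependent_freeImage hn ?_
    have map_eq_zero : presentationMap F n (d * p - rename (freeVar n) b) = 0 :=
      relationIdeal_le_ker hn hb
    rw [map_sub, map_mul, hp, mul_zero, zero_sub, neg_eq_zero] at map_eq_zero
    rw [aeval_freeImage, map_eq_zero, map_zero]
  rw [b_eq_zero, map_zero, sub_zero] at hb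
  exact mem_relationIdeal_of_xMonoid_mul_mem hn hd hb
end

section
/- Let q = 3 and n = 2, and let G = SL_2(F_3) ⊆ GL_2(F_3) act on F_3[x_1,x_2,y_1,y_2] as described. Set f_1 := x_1^3 x_2 − x_1 x_2^3 and f_2 := x_1^6 + x_1^4 x_2^2 + x_1^2 x_2^4 + x_2^6, so that F_3[x_1,x_2]^G = F_3[f_1,f_2]. Then the F_3-subalgebra of F_3[x_1,x_2,y_1,y_2] generated by f_1, f_2, f_1*, f_2*, and u_i for all i ∈ ℤ is a proper subalgebra of the invariant ring F_3[x_1,x_2,y_1,y_2]^G; that is, F_3[V ⊕ V*]^{SL_2(F_3)} is not generated by generators of F_3[V]^{SL_2(F_3)}, their *-images, and the invariants u_i. -/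
open MvPolynomial Matrix

/-- The action of `σ ∈ GL_2(F_3)` on `F_3[V ⊕ V*] = F_3[x_1,x_2,y_1,y_2]`:
`σ` acts naturally on the span of the `x_j` (so `σ·x_j = ∑_i σ_{ij} x_i`)
and by `σ·λ = λ ∘ σ⁻¹` on the span of the `y_j` (so `σ·y_j = ∑_i (σ⁻¹)_{ji} y_i`). -/
noncomputable def gactSL (σ : GL (Fin 2) (ZMod 3)) :
    MvPolynomial (Fin 2 ⊕ Fin 2) (ZMod 3) →ₐ[ZMod 3] MvPolynomial (Fin 2 ⊕ Fin 2) (ZMod 3) :=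
  aeval (Sum.elim
    (fun j => ∑ i : Fin 2, C ((σ : Matrix (Fin 2) (Fin 2) (ZMod 3)) i j) * X (Sum.inl i))
    (fun j => ∑ i : Fin 2,
      C (((σ⁻¹ : GL (Fin 2) (ZMod 3)) : Matrix (Fin 2) (Fin 2) (ZMod 3)) j i) * X (Sum.inr i)))

/-- The invariant `u_j` for `j : ℤ` (here `q = 3`, `n = 2`). -/
noncomputable def uSL (j : ℤ) : MvPolynomial (Fin 2 ⊕ Fin 2) (ZMod 3) :=
  if 0 ≤ j then
    X (Sum.inl 0) ^ 3 ^ j.toNat * X (Sum.inr 0) + X (Sum.inl 1) ^ 3 ^ j.toNat * X (Sum.inr 1)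
  else
    X (Sum.inl 0) * X (Sum.inr 0) ^ 3 ^ (-j).toNat + X (Sum.inl 1) * X (Sum.inr 1) ^ 3 ^ (-j).toNat

/-- The generators `f_1 = x_1^3 x_2 - x_1 x_2^3`, `f_2 = x_1^6 + x_1^4 x_2^2 + x_1^2 x_2^4 + x_2^6`
of `F_3[V]^{SL_2(F_3)}`, their images `f_1^*, f_2^*` under the involution `*`
(`x_1 ↦ y_2, x_2 ↦ y_1, y_1 ↦ x_2, y_2 ↦ x_1`), and all the `u_i`, `i ∈ ℤ`. -/
noncomputable def genSetSL : Set (MvPolynomial (Fin 2 ⊕ Fin 2) (ZMod 3)) :=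
  {X (Sum.inl 0) ^ 3 * X (Sum.inl 1) - X (Sum.inl 0) * X (Sum.inl 1) ^ 3,
    X (Sum.inl 0) ^ 6 + X (Sum.inl 0) ^ 4 * X (Sum.inl 1) ^ 2
      + X (Sum.inl 0) ^ 2 * X (Sum.inl 1) ^ 4 + X (Sum.inl 1) ^ 6,
    X (Sum.inr 1) ^ 3 * X (Sum.inr 0) - X (Sum.inr 1) * X (Sum.inr 0) ^ 3,
    X (Sum.inr 1) ^ 6 + X (Sum.inr 1) ^ 4 * X (Sum.inr 0) ^ 2
      + X (Sum.inr 1) ^ 2 * X (Sum.inr 0) ^ 4 + X (Sum.inr 0) ^ 6} ∪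
  Set.range uSL

/-!
Replace the basis `y` of `V*` by `z = (y_2, -y_1)`: under `SL_2`, the vectors `x` and `z`
transform in the same way. Every `u_j`, `f_1` and `f_1^*` is, up to sign, a bracket
`v_1^{q^n} w_2 - v_2^{q^n} w_1` with `v, w ∈ {x, z}`, while `f_2 = D(x)` and `f_2^* = D(z)` for the
Dickson invariant `D`. Since `x + z` transforms like `x`, the polynomial `D(x + z)` is a further
invariant. At points where `x` and `z` are proportional nonzero vectors of `K²` all brackets vanish
and `D(x) = D(z) = 1`, so the given generators cannot tell such points apart. But `D(x + z)` can:
it is `0` if `x = -z` and `1` otherwise. Both cases occur as soon as `q > 2`.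
-/

section BracketsAndDicksonInvariant

variable {A B F : Type*} [CommRing A] [CommRing B] [FunLike F A B] [RingHomClass F A B]

/-- The bracket `v_1^{q^n} w_2 - v_2^{q^n} w_1` of two vectors, which over a field with `q` elements
is semi-invariant under linear substitutions; for `v = w` it is a Moore determinant. -/
def mooreBracket (q n : ℕ) (v w : Fin 2 → A) : A :=
  v 0 ^ q ^ n * w 1 - v 1 ^ q ^ n * w 0

/-- The Dickson invariant `∑_i v_1^{(q-1)i} v_2^{(q-1)(q-i)}` of degree `q(q-1)`: the quotient of
`v_1^{q²} v_2 - v_1 v_2^{q²}` by `v_1^q v_2 - v_1 v_2^q`. -/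
def dicksonInvariant (q : ℕ) (v : Fin 2 → A) : A :=
  ∑ i ∈ Finset.range (q + 1), (v 0 ^ (q - 1)) ^ i * (v 1 ^ (q - 1)) ^ (q - i)

theorem map_mooreBracket (f : F) (q n : ℕ) (v w : Fin 2 → A) :
    f (mooreBracket q n v w) = mooreBracket q n (f ∘ v) (f ∘ w) := by
  simp [mooreBracket]

theorem map_dicksonInvariant (f : F) (q : ℕ) (v : Fin 2 → A) :
    f (dicksonInvariant q v) = dicksonInvariant q (f ∘ v) := by
  simp [dicksonInvariant]

theorem mooreBracket_one_mul_dicksonInvariant {q : ℕ} (hq : q ≠ 0) (v : Fin 2 → A) :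
    mooreBracket q 1 v v * dicksonInvariant q v = mooreBracket q 2 v v := by
  obtain ⟨r, rfl⟩ := Nat.exists_eq_succ_of_ne_zero hq
  have hsum := (Commute.all (v 0 ^ r) (v 1 ^ r)).mul_geom_sum₂ (r + 1 + 1)
  simp only [mooreBracket, dicksonInvariant, Nat.succ_eq_add_one, Nat.add_sub_cancel] at hsum ⊢
  linear_combination v 0 * v 1 * hsum

theorem mooreBracket_cons_zero {q : ℕ} (hq : q ≠ 0) (n : ℕ) (s t : A) :
    mooreBracket q n ![s, 0] ![t, 0] = 0 := by
  simp [mooreBracket, hq]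

theorem dicksonInvariant_cons_zero {q : ℕ} (hq : 1 < q) (t : A) :
    dicksonInvariant q ![t, 0] = (t ^ (q - 1)) ^ q := by
  rw [dicksonInvariant, Finset.sum_range_succ, Finset.sum_eq_zero]
  · simp
  · intro i hi
    simp [Nat.sub_ne_zero_of_lt hq, Nat.sub_ne_zero_of_lt (Finset.mem_range.mp hi)]

end BracketsAndDicksonInvariant

section LinearSubstitution

theorem vecMul_map_algebraMap_apply {R A : Type*} [CommRing R] [CommRing A] [Algebra R A]
    (v : Fin 2 → A) (M : Matrix (Fin 2) (Fin 2) R) (j : Fin 2) :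
    (v ᵥ* M.map (algebraMap R A)) j = M 0 j • v 0 + M 1 j • v 1 := by
  simp [Matrix.vecMul, dotProduct, Algebra.smul_def, mul_comm]

variable {K A : Type*} [Field K] [Fintype K] [CommRing A] [Algebra K A]

theorem smul_add_smul_pow_card_pow (a b : K) (s t : A) (n : ℕ) :
    (a • s + b • t) ^ Fintype.card K ^ n =
      a • s ^ Fintype.card K ^ n + b • t ^ Fintype.card K ^ n := by
  have hφ (r : A) : (FiniteField.frobeniusAlgHom K A ^ n) r = r ^ Fintype.card K ^ n := by
    rw [AlgHom.coe_pow, FiniteField.coe_frobeniusAlgHom, pow_iterate]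
  simp only [← hφ, map_add, map_smul]

theorem mooreBracket_vecMul (n : ℕ) (v w : Fin 2 → A) (M : Matrix (Fin 2) (Fin 2) K) :
    mooreBracket (Fintype.card K) n (v ᵥ* M.map (algebraMap K A)) (w ᵥ* M.map (algebraMap K A)) =
      M.det • mooreBracket (Fintype.card K) n v w := by
  simp only [mooreBracket, vecMul_map_algebraMap_apply, smul_add_smul_pow_card_pow]
  simp only [Matrix.det_fin_two, Algebra.smul_def, map_sub, map_mul]
  ring

variable (K) in
theorem mooreBracket_X_ne_zero :
    mooreBracket (Fintype.card K) 1 (X : Fin 2 → MvPolynomial (Fin 2) K) X ≠ 0 := fun h ↦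
  FiniteField.X_pow_card_sub_X_ne_zero K Fintype.one_lt_card <| by
    simpa [mooreBracket] using congrArg (aeval ![(Polynomial.X : Polynomial K), 1]) h

-- It suffices to treat the generic vector `X`, for which `mooreBracket _ 1 X X` can be cancelled.
theorem dicksonInvariant_vecMul (v : Fin 2 → A) {M : Matrix (Fin 2) (Fin 2) K} (hM : M.det ≠ 0) :
    dicksonInvariant (Fintype.card K) (v ᵥ* M.map (algebraMap K A)) =
      dicksonInvariant (Fintype.card K) v := by
  have hgeneric : dicksonInvariant (Fintype.card K)
      (X ᵥ* M.map (algebraMap K (MvPolynomial (Fin 2) K))) =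
        dicksonInvariant (Fintype.card K) (X : Fin 2 → MvPolynomial (Fin 2) K) := by
    refine mul_left_cancel₀ (smul_ne_zero hM (mooreBracket_X_ne_zero K)) ?_
    rw [← mooreBracket_vecMul, mooreBracket_one_mul_dicksonInvariant Fintype.card_ne_zero,
      mooreBracket_vecMul, mooreBracket_vecMul, smul_mul_assoc,
      mooreBracket_one_mul_dicksonInvariant Fintype.card_ne_zero]
  have hX : aeval (R := K) v ∘ X = v := funext (aeval_X v)
  have hXM : aeval v ∘ (X ᵥ* M.map (algebraMap K (MvPolynomial (Fin 2) K))) =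
      v ᵥ* M.map (algebraMap K A) := by
    ext1 j
    simp only [Function.comp_apply, vecMul_map_algebraMap_apply, map_add, map_smul, aeval_X]
  simpa only [map_dicksonInvariant, hX, hXM] using congrArg (aeval v) hgeneric

theorem dicksonInvariant_card_cons_zero [DecidableEq K] (t : K) :
    dicksonInvariant (Fintype.card K) ![t, 0] = if t = 0 then 0 else 1 := by
  rw [dicksonInvariant_cons_zero Fintype.one_lt_card]
  split_ifs with ht
  · simp [ht, Nat.sub_ne_zero_of_lt (Fintype.one_lt_card (α := K))]
  · rw [FiniteField.pow_card_sub_one_eq_one t ht, one_pow]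

end LinearSubstitution

section Action

variable {R : Type*} [CommRing R]

/-- The action of `σ ∈ GL_2(R)` on `R[V ⊕ V*]`; for `R = 𝔽₃` this is `gactSL`. -/
noncomputable def glAction (σ : GL (Fin 2) R) :
    MvPolynomial (Fin 2 ⊕ Fin 2) R →ₐ[R] MvPolynomial (Fin 2 ⊕ Fin 2) R :=
  aeval (Sum.elim
    (fun j => ∑ i : Fin 2, C ((σ : Matrix (Fin 2) (Fin 2) R) i j) * X (Sum.inl i))
    (fun j => ∑ i : Fin 2,
      C (((σ⁻¹ : GL (Fin 2) R) : Matrix (Fin 2) (Fin 2) R) j i) * X (Sum.inr i)))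

/-- The vectors of polynomials on which `SL_2(R)` acts as it does on `x = (x_1, x_2)`. -/
def IsSLEquivariant (v : Fin 2 → MvPolynomial (Fin 2 ⊕ Fin 2) R) : Prop :=
  ∀ σ : GL (Fin 2) R, (σ : Matrix (Fin 2) (Fin 2) R).det = 1 →
    glAction σ ∘ v = v ᵥ* (σ : Matrix (Fin 2) (Fin 2) R).map (algebraMap R _)

theorem IsSLEquivariant.add {v w : Fin 2 → MvPolynomial (Fin 2 ⊕ Fin 2) R}
    (hv : IsSLEquivariant v) (hw : IsSLEquivariant w) : IsSLEquivariant (v + w) := by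
  intro σ hσ
  rw [map_comp_add, Matrix.add_vecMul, hv σ hσ, hw σ hσ]

variable (R)

/-- The invariant ring `R[V ⊕ V*]^{SL_2(R)}`. -/
noncomputable def slInvariants : Subalgebra R (MvPolynomial (Fin 2 ⊕ Fin 2) R) :=
  ⨅ (σ : GL (Fin 2) R) (_ : (σ : Matrix (Fin 2) (Fin 2) R).det = 1),
    AlgHom.equalizer (glAction σ) (AlgHom.id R _)

variable {R} in
theorem mem_slInvariants {p : MvPolynomial (Fin 2 ⊕ Fin 2) R} :
    p ∈ slInvariants R ↔
      ∀ σ : GL (Fin 2) R, (σ : Matrix (Fin 2) (Fin 2) R).det = 1 → glAction σ p = p := by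
  simp [slInvariants, Algebra.mem_iInf]

/-- The vector `x = (x_1, x_2)` of linear forms. -/
noncomputable def xVec : Fin 2 → MvPolynomial (Fin 2 ⊕ Fin 2) R := X ∘ Sum.inl

/-- The vector `z = (y_2, -y_1)`, which realises the isomorphism `V* ≅ V` of representations of
`SL_2(R)`. -/
noncomputable def zVec : Fin 2 → MvPolynomial (Fin 2 ⊕ Fin 2) R :=
  ![X (Sum.inr 1), -X (Sum.inr 0)]

theorem isSLEquivariant_xVec : IsSLEquivariant (xVec R) := by
  intro σ _
  ext1 j
  rw [vecMul_map_algebraMap_apply]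
  simp [xVec, glAction, C_mul']

theorem isSLEquivariant_zVec : IsSLEquivariant (zVec R) := by
  intro σ hσ
  have hinv : ((σ⁻¹ : GL (Fin 2) R) : Matrix (Fin 2) (Fin 2) R) =
      !![σ 1 1, -σ 0 1; -σ 1 0, σ 0 0] := by
    rw [Matrix.coe_units_inv, Matrix.inv_def, hσ, Matrix.adjugate_fin_two]
    simp
  ext1 j
  rw [vecMul_map_algebraMap_apply]
  fin_cases j <;> simp [zVec, glAction, hinv, C_mul', add_comm]

/-- The involution `*` of `R[V ⊕ V*]`, given by `x_i ↦ y_{3-i}` and `y_i ↦ x_{3-i}`. -/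
noncomputable def dualInvolution :
    MvPolynomial (Fin 2 ⊕ Fin 2) R →ₐ[R] MvPolynomial (Fin 2 ⊕ Fin 2) R :=
  rename (Sum.elim (Sum.inr ∘ Fin.rev) (Sum.inl ∘ Fin.rev))

theorem zVec_eq_vecMul :
    zVec R = (dualInvolution R ∘ xVec R) ᵥ*
      (!![1, 0; 0, -1] : Matrix (Fin 2) (Fin 2) R).map (algebraMap R _) := by
  ext1 j
  rw [vecMul_map_algebraMap_apply]
  fin_cases j <;> simp [zVec, xVec, dualInvolution]

variable {R}

/-- Evaluation at the point `x = (t, 0)`, `z = (1, 0)`, that is, `y = (0, 1)`. -/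
noncomputable def evalParallel (t : R) : MvPolynomial (Fin 2 ⊕ Fin 2) R →ₐ[R] R :=
  aeval (Sum.elim ![t, 0] ![0, 1])

theorem evalParallel_comp_xVec (t : R) : evalParallel t ∘ xVec R = ![t, 0] := by
  ext1 j
  simp [evalParallel, xVec]

theorem evalParallel_comp_zVec (t : R) : evalParallel t ∘ zVec R = ![1, 0] := by
  ext1 j
  fin_cases j <;> simp [evalParallel, zVec]

end Action

section Generators

variable {K : Type*} [Field K] [Fintype K]

theorem IsSLEquivariant.mooreBracket_mem_slInvariants {v w : Fin 2 → MvPolynomial (Fin 2 ⊕ Fin 2) K}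
    (hv : IsSLEquivariant v) (hw : IsSLEquivariant w) (n : ℕ) :
    mooreBracket (Fintype.card K) n v w ∈ slInvariants K := by
  rw [mem_slInvariants]
  intro σ hσ
  rw [map_mooreBracket, hv σ hσ, hw σ hσ, mooreBracket_vecMul, hσ, one_smul]

theorem IsSLEquivariant.dicksonInvariant_mem_slInvariants
    {v : Fin 2 → MvPolynomial (Fin 2 ⊕ Fin 2) K} (hv : IsSLEquivariant v) :
    dicksonInvariant (Fintype.card K) v ∈ slInvariants K := by
  rw [mem_slInvariants]
  intro σ hσ
  rw [map_dicksonInvariant, hv σ hσ, dicksonInvariant_vecMul v (hσ ▸ one_ne_zero)]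

variable (K)

/-- The invariant `u_j`, for `j : ℤ`. -/
noncomputable def uInvariant (j : ℤ) : MvPolynomial (Fin 2 ⊕ Fin 2) K :=
  if 0 ≤ j then
    X (Sum.inl 0) ^ Fintype.card K ^ j.toNat * X (Sum.inr 0)
      + X (Sum.inl 1) ^ Fintype.card K ^ j.toNat * X (Sum.inr 1)
  else
    X (Sum.inl 0) * X (Sum.inr 0) ^ Fintype.card K ^ (-j).toNat
      + X (Sum.inl 1) * X (Sum.inr 1) ^ Fintype.card K ^ (-j).toNat

/-- The invariants `f_1, f_2, f_1^*, f_2^*` and `u_j`, `j ∈ ℤ`; for `K = 𝔽₃` this is `genSetSL`. -/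
def slGenerators : Set (MvPolynomial (Fin 2 ⊕ Fin 2) K) :=
  {mooreBracket (Fintype.card K) 1 (xVec K) (xVec K), dicksonInvariant (Fintype.card K) (xVec K),
    dualInvolution K (mooreBracket (Fintype.card K) 1 (xVec K) (xVec K)),
    dualInvolution K (dicksonInvariant (Fintype.card K) (xVec K))} ∪ Set.range (uInvariant K)

theorem dualInvolution_mooreBracket_xVec (n : ℕ) :
    dualInvolution K (mooreBracket (Fintype.card K) n (xVec K) (xVec K)) =
      -mooreBracket (Fintype.card K) n (zVec K) (zVec K) := by
  rw [zVec_eq_vecMul, mooreBracket_vecMul, map_mooreBracket]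
  simp

theorem dualInvolution_dicksonInvariant_xVec :
    dualInvolution K (dicksonInvariant (Fintype.card K) (xVec K)) =
      dicksonInvariant (Fintype.card K) (zVec K) := by
  rw [zVec_eq_vecMul, dicksonInvariant_vecMul _ (by simp), map_dicksonInvariant]

variable {K}

theorem uInvariant_of_nonneg {j : ℤ} (hj : 0 ≤ j) :
    uInvariant K j = -mooreBracket (Fintype.card K) j.toNat (xVec K) (zVec K) := by
  simp [uInvariant, hj, mooreBracket, xVec, zVec, add_comm]

theorem uInvariant_of_neg {j : ℤ} (hj : j < 0) :
    uInvariant K j = mooreBracket (Fintype.card K) (-j).toNat (zVec K) (xVec K) := by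
  have hneg : (-X (Sum.inr 0) : MvPolynomial (Fin 2 ⊕ Fin 2) K) ^ Fintype.card K ^ (-j).toNat =
      -X (Sum.inr 0) ^ Fintype.card K ^ (-j).toNat := by
    simpa using smul_add_smul_pow_card_pow (-1 : K) 0
      (X (Sum.inr 0) : MvPolynomial (Fin 2 ⊕ Fin 2) K) 0 (-j).toNat
  simp only [uInvariant, hj.not_ge, if_false, mooreBracket, xVec, zVec, Function.comp_apply,
    Matrix.cons_val_zero, Matrix.cons_val_one, hneg]
  ring

variable (K) in
theorem slGenerators_subset_slInvariants : slGenerators K ⊆ slInvariants K := by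
  have hx := isSLEquivariant_xVec K
  have hz := isSLEquivariant_zVec K
  rintro _ ((rfl | rfl | rfl | rfl) | ⟨j, rfl⟩)
  · exact hx.mooreBracket_mem_slInvariants hx 1
  · exact hx.dicksonInvariant_mem_slInvariants
  · rw [dualInvolution_mooreBracket_xVec]
    exact neg_mem (hz.mooreBracket_mem_slInvariants hz 1)
  · rw [dualInvolution_dicksonInvariant_xVec]
    exact hz.dicksonInvariant_mem_slInvariants
  · rcases le_or_gt 0 j with hj | hj
    · rw [uInvariant_of_nonneg hj]
      exact neg_mem (hx.mooreBracket_mem_slInvariants hz _)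
    · rw [uInvariant_of_neg hj]
      exact hz.mooreBracket_mem_slInvariants hx _

theorem evalParallel_eq_of_mem_adjoin_slGenerators {p : MvPolynomial (Fin 2 ⊕ Fin 2) K}
    (hp : p ∈ Algebra.adjoin K (slGenerators K)) {s t : K} (hs : s ≠ 0) (ht : t ≠ 0) :
    evalParallel s p = evalParallel t p := by
  classical
  suffices Algebra.adjoin K (slGenerators K) ≤
      AlgHom.equalizer (evalParallel s) (evalParallel t) from this hp
  have hq : Fintype.card K ≠ 0 := Fintype.card_ne_zero
  rw [Algebra.adjoin_le_iff]
  rintro _ ((rfl | rfl | rfl | rfl) | ⟨j, rfl⟩) <;> rw [SetLike.mem_coe, AlgHom.mem_equalizer]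
  · simp [map_mooreBracket, evalParallel_comp_xVec, mooreBracket_cons_zero hq]
  · simp [map_dicksonInvariant, evalParallel_comp_xVec, dicksonInvariant_card_cons_zero, hs, ht]
  · rw [dualInvolution_mooreBracket_xVec]
    simp [map_mooreBracket, evalParallel_comp_zVec]
  · rw [dualInvolution_dicksonInvariant_xVec]
    simp [map_dicksonInvariant, evalParallel_comp_zVec]
  · rcases le_or_gt 0 j with hj | hj
    · simp [uInvariant_of_nonneg hj, map_mooreBracket, evalParallel_comp_xVec,
        evalParallel_comp_zVec, mooreBracket_cons_zero hq]
    · simp [uInvariant_of_neg hj, map_mooreBracket, evalParallel_comp_xVec,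
        evalParallel_comp_zVec, mooreBracket_cons_zero hq]

end Generators

theorem SL2_F3_not_generated_general {K : Type*} [Field K] [Fintype K]
    (hK : 2 < Fintype.card K) : Algebra.adjoin K (slGenerators K) < slInvariants K := by
  classical
  refine SetLike.lt_iff_le_and_exists.mpr
    ⟨Algebra.adjoin_le (slGenerators_subset_slInvariants K),
      dicksonInvariant (Fintype.card K) (xVec K + zVec K),
      ((isSLEquivariant_xVec K).add (isSLEquivariant_zVec K)).dicksonInvariant_mem_slInvariants,
      fun hmem ↦ ?_⟩
  obtain ⟨t, -, ht⟩ : ∃ t ∈ Finset.univ, t ∉ ({0, -1} : Finset K) :=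
    Finset.exists_mem_notMem_of_card_lt_card (Finset.card_le_two.trans_lt hK)
  obtain ⟨ht0, ht1⟩ : t ≠ 0 ∧ t + 1 ≠ 0 := by simpa [eq_neg_iff_add_eq_zero] using ht
  have heval := evalParallel_eq_of_mem_adjoin_slGenerators hmem ht0 (neg_ne_zero.mpr one_ne_zero)
  simp [map_dicksonInvariant, evalParallel_comp_xVec, evalParallel_comp_zVec,
    dicksonInvariant_card_cons_zero, ht1] at heval

theorem gactSL_eq_glAction : gactSL = glAction := rfl

theorem uSL_eq_uInvariant : uSL = uInvariant (ZMod 3) := by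
  ext1 j
  simp only [uSL, uInvariant, ZMod.card]

theorem genSetSL_eq_slGenerators : genSetSL = slGenerators (ZMod 3) := by
  have hf₁ : mooreBracket 3 1 (xVec (ZMod 3)) (xVec (ZMod 3)) =
      X (Sum.inl 0) ^ 3 * X (Sum.inl 1) - X (Sum.inl 0) * X (Sum.inl 1) ^ 3 := by
    simp only [mooreBracket, xVec, Function.comp_apply]
    ring
  have hf₂ : dicksonInvariant 3 (xVec (ZMod 3)) =
      X (Sum.inl 0) ^ 6 + X (Sum.inl 0) ^ 4 * X (Sum.inl 1) ^ 2
        + X (Sum.inl 0) ^ 2 * X (Sum.inl 1) ^ 4 + X (Sum.inl 1) ^ 6 := by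
    simp only [dicksonInvariant, xVec, Function.comp_apply, Finset.sum_range_succ,
      Finset.sum_range_zero]
    ring
  rw [genSetSL, slGenerators, uSL_eq_uInvariant, ZMod.card, hf₁, hf₂]
  simp [dualInvolution]

/-- For `G = SL_2(F_3)`, the subalgebra of `F_3[V ⊕ V*]` generated by `f_1, f_2, f_1^*, f_2^*`
and the `u_i` (`i ∈ ℤ`) is a **proper** subalgebra of the invariant ring
`F_3[V ⊕ V*]^{SL_2(F_3)}`. -/
theorem SL2_F3_not_generated :
    (∀ p ∈ Algebra.adjoin (ZMod 3) genSetSL,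
      ∀ σ : GL (Fin 2) (ZMod 3),
        Matrix.det (σ : Matrix (Fin 2) (Fin 2) (ZMod 3)) = 1 → gactSL σ p = p) ∧
    ∃ p : MvPolynomial (Fin 2 ⊕ Fin 2) (ZMod 3),
      (∀ σ : GL (Fin 2) (ZMod 3),
        Matrix.det (σ : Matrix (Fin 2) (Fin 2) (ZMod 3)) = 1 → gactSL σ p = p) ∧
      p ∉ Algebra.adjoin (ZMod 3) genSetSL := by
  simpa only [gactSL_eq_glAction, genSetSL_eq_slGenerators, SetLike.lt_iff_le_and_exists,
    SetLike.le_def, mem_slInvariants] using SL2_F3_not_generated_general (K := ZMod 3) (by simp)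
end
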